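/- Let X be a tree and let f : X → X be a continuous map with zero topological entropy. If (x,y) is an IN-pair of the restricted system (CR(f), f|_{CR(f)}) with x ≠ y, then both ω-limit sets ω_f(x) and ω_f(y) are infinite. -/

import Mathlib

open Set Filter Topology Function
open scoped ENNReal

/-- A subset of a topological space is an *arc* if it is homeomorphic to `[0,1]`. -/
def IsArc {X : Type*} [TopologicalSpace X] (A : Set X) : Prop :=
  Nonempty (A ≃ₜ Set.Icc (0 : ℝ) 1)

/-- A point `p` is an *endpoint* of the arc `A` if `p ∈ A` and `A \ {p}` is connected. -/
def IsArcEndpoint {X : Type*} [TopologicalSpace X] (A : Set X) (p : X) : Prop :=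
  p ∈ A ∧ IsConnected (A \ {p})

/-- A subset is a *simple closed curve* if it is homeomorphic to the unit circle. -/
def IsSimpleClosedCurve {X : Type*} [TopologicalSpace X] (S : Set X) : Prop :=
  Nonempty (S ≃ₜ Metric.sphere (0 : ℂ) 1)

/-- A *tree* is a compact connected metric space which is a union of finitely many arcs,
any two of which are disjoint or intersect only in (one or both of) their endpoints,
and which contains no simple closed curve. -/
def IsTree (X : Type*) [MetricSpace X] : Prop :=
  CompactSpace X ∧ ConnectedSpace X ∧
    (∃ 𝒜 : Finset (Set X), (∀ A ∈ 𝒜, IsArc A) ∧ ⋃₀ (𝒜 : Set (Set X)) = Set.univ ∧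
      ∀ A ∈ 𝒜, ∀ B ∈ 𝒜, A ≠ B → ∀ p ∈ A ∩ B, IsArcEndpoint A p ∧ IsArcEndpoint B p) ∧
    ∀ S : Set X, ¬ IsSimpleClosedCurve S

/-- A *dendrite* is a locally connected continuum containing no simple closed curve. -/
def IsDendrite (X : Type*) [MetricSpace X] : Prop :=
  CompactSpace X ∧ ConnectedSpace X ∧ LocallyConnectedSpace X ∧
    ∀ S : Set X, ¬ IsSimpleClosedCurve S

/-- `𝒰` is a finite open cover of the subset `Y`. -/
def IsOpenCoverOn {X : Type*} [TopologicalSpace X] (Y : Set X) (𝒰 : Finset (Set X)) : Prop :=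
  (∀ U ∈ 𝒰, IsOpen U) ∧ Y ⊆ ⋃₀ (𝒰 : Set (Set X))

/-- `N(⋁_{i=1}^n f^{-a_i}(𝒰))`, relative to the subset `Y`: the minimal number `m` of elements
of the join cover `⋁_{i=1}^n f^{-a_i}(𝒰)` needed to cover `Y`. -/
noncomputable def seqCoverCountOn {X : Type*} (f : X → X) (Y : Set X) (a : ℕ → ℕ)
    (𝒰 : Finset (Set X)) (n : ℕ) : ℕ :=
  sInf { m | ∃ c : Fin m → Fin n → Set X, (∀ j i, c j i ∈ 𝒰) ∧
    Y ⊆ ⋃ j, ⋂ i, f^[a i.1] ⁻¹' c j i }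

/-- Topological sequence entropy of `f` restricted to the (invariant) subset `Y`,
with respect to the sequence `a`. -/
noncomputable def seqEntropyOn {X : Type*} [TopologicalSpace X] (f : X → X) (Y : Set X)
    (a : ℕ → ℕ) : ℝ≥0∞ :=
  ⨆ (𝒰 : Finset (Set X)) (_ : IsOpenCoverOn Y 𝒰),
    Filter.limsup
      (fun n : ℕ => ENNReal.ofReal (Real.log (seqCoverCountOn f Y a 𝒰 n) / n)) Filter.atTop

/-- Topological sequence entropy of `f : X → X` with respect to the sequence `a`. -/
noncomputable def seqEntropy {X : Type*} [TopologicalSpace X] (f : X → X) (a : ℕ → ℕ) : ℝ≥0∞ :=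
  seqEntropyOn f Set.univ a

/-- The ordinary topological entropy `h(f)`, i.e. the sequence entropy for `A = (0,1,2,…)`. -/
noncomputable def topEntropy {X : Type*} [TopologicalSpace X] (f : X → X) : ℝ≥0∞ :=
  seqEntropy f id

/-- `h_∞(f|_Y)`: the supremum over all strictly increasing sequences of positive integers of
the topological sequence entropies of `f` restricted to `Y`. -/
noncomputable def supSeqEntropyOn {X : Type*} [TopologicalSpace X] (f : X → X) (Y : Set X) :
    ℝ≥0∞ :=
  ⨆ (a : ℕ → ℕ) (_ : StrictMono a) (_ : 1 ≤ a 0), seqEntropyOn f Y a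

/-- `h_∞(f)`: the supremum of the topological sequence entropies of `f`. -/
noncomputable def supSeqEntropy {X : Type*} [TopologicalSpace X] (f : X → X) : ℝ≥0∞ :=
  supSeqEntropyOn f Set.univ

/-- The ω-limit set `ω_f(x) = ⋂_n closure {f^k(x) : k ≥ n}`. -/
def omegaLimitSet {X : Type*} [TopologicalSpace X] (f : X → X) (x : X) : Set X :=
  ⋂ n : ℕ, closure ((fun k => f^[k] x) '' Set.Ici n)

/-- `ω(f) = ⋃_x ω_f(x)`. -/
def omegaSet {X : Type*} [TopologicalSpace X] (f : X → X) : Set X :=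
  ⋃ x : X, omegaLimitSet f x

/-- The non-wandering set `Ω(f)`. -/
def nonWanderingSet {X : Type*} [TopologicalSpace X] (f : X → X) : Set X :=
  { x | ∀ U : Set X, IsOpen U → x ∈ U → ∃ n, 1 ≤ n ∧ (f^[n] ⁻¹' U ∩ U).Nonempty }

/-- There is an ε-chain from `x` to `y` under `f`. -/
def EpsChain {X : Type*} [MetricSpace X] (f : X → X) (ε : ℝ) (x y : X) : Prop :=
  ∃ n, 1 ≤ n ∧ ∃ c : ℕ → X, c 0 = x ∧ c n = y ∧ ∀ i < n, dist (f (c i)) (c (i + 1)) < ε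

/-- The chain recurrent set `CR(f)`. -/
def chainRecurrentSet {X : Type*} [MetricSpace X] (f : X → X) : Set X :=
  { x | ∀ ε > 0, EpsChain f ε x x }

/-- The chain recurrent set of the restriction `f|_Y`: chain recurrence witnessed by
ε-chains lying entirely inside `Y`. -/
def chainRecurrentSetOn {X : Type*} [MetricSpace X] (f : X → X) (Y : Set X) : Set X :=
  { x ∈ Y | ∀ ε > 0, ∃ n, 1 ≤ n ∧ ∃ c : ℕ → X, c 0 = x ∧ c n = x ∧
      (∀ i ≤ n, c i ∈ Y) ∧ ∀ i < n, dist (f (c i)) (c (i + 1)) < ε }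

/-- `I` is a periodic arc of `f` of period `s`: an arc with `f^s(I) ⊆ I` whose iterates
`I, f(I), …, f^{s-1}(I)` are pairwise disjoint. -/
def IsPeriodicArc {X : Type*} [TopologicalSpace X] (f : X → X) (I : Set X) (s : ℕ) : Prop :=
  IsArc I ∧ 1 ≤ s ∧ Set.MapsTo f^[s] I I ∧
    ∀ i j, i < j → j < s → Disjoint (f^[i] '' I) (f^[j] '' I)

/-- `Orb_f(I) = I ∪ f(I) ∪ … ∪ f^{s-1}(I)`. -/
def arcOrbit {X : Type*} (f : X → X) (I : Set X) (s : ℕ) : Set X :=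
  ⋃ i ∈ Finset.range s, f^[i] '' I

/-- `I` is an independence set for the pair `(U, V)` under `f`. -/
def IsIndepSetPair {X : Type*} (f : X → X) (U V : Set X) (I : Finset ℕ) : Prop :=
  ∀ J ⊆ I, J.Nonempty → ∀ s : ℕ → Bool,
    (⋂ j ∈ J, f^[j] ⁻¹' (if s j then U else V)).Nonempty

/-- `(x, y)` is an IN-pair of `(X, f)`. -/
def INPair {X : Type*} [TopologicalSpace X] (f : X → X) (x y : X) : Prop :=
  ∀ U ∈ nhds x, ∀ V ∈ nhds y, ∀ m : ℕ, ∃ I : Finset ℕ, m ≤ I.card ∧ IsIndepSetPair f U V I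

/-- The set `IN(X, f)` of IN-pairs of `(X, f)`. -/
def INPairs {X : Type*} [TopologicalSpace X] (f : X → X) : Set (X × X) :=
  { p | INPair f p.1 p.2 }

/-- `(x, y)` is an IN-pair of the restricted (sub)system `(Y, f|_Y)`, for `Y` invariant. -/
def INPairOn {X : Type*} [TopologicalSpace X] (f : X → X) (Y : Set X) (x y : X) : Prop :=
  x ∈ Y ∧ y ∈ Y ∧ ∀ U ∈ nhds x, ∀ V ∈ nhds y, ∀ m : ℕ, ∃ I : Finset ℕ, m ≤ I.card ∧
    ∀ J ⊆ I, J.Nonempty → ∀ s : ℕ → Bool,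
      (Y ∩ ⋂ j ∈ J, f^[j] ⁻¹' (if s j then U else V)).Nonempty

/-- `(x, y)` is a Li–Yorke pair for `f`. -/
def LiYorkePair {X : Type*} [MetricSpace X] (f : X → X) (x y : X) : Prop :=
  Filter.liminf (fun n : ℕ => dist (f^[n] x) (f^[n] y)) Filter.atTop = 0 ∧
    0 < Filter.limsup (fun n : ℕ => dist (f^[n] x) (f^[n] y)) Filter.atTop

open Set Filter Topology Function
open scoped ENNReal

def hull {X : Type*} [TopologicalSpace X] (a b : X) : Set X :=
  ⋂₀ {S | IsPreconnected S ∧ a ∈ S ∧ b ∈ S}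

structure TreeLike (X : Type*) [MetricSpace X] : Prop where
  arc : ∀ a b : X, a ≠ b → ∃ γ : ℝ → X, ContinuousOn γ (Icc 0 1) ∧ InjOn γ (Icc 0 1) ∧
    γ 0 = a ∧ γ 1 = b ∧ ∀ S, IsPreconnected S → a ∈ S → b ∈ S → γ '' Icc 0 1 ⊆ S
  star : ∀ p : X, ∃ S : Finset X, p ∉ S ∧ (⋃ s ∈ S, hull p s) ∈ 𝓝 p
  fin : ∀ C : Set X, IsPreconnected C → ∃ F : Set X, F.Finite ∧ C \ F ⊆ interior C ∧
    closure C \ F ⊆ C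

section hullbasic
variable {X : Type*} [TopologicalSpace X]

lemma hull_subset {a b : X} {S : Set X} (hS : IsPreconnected S) (ha : a ∈ S) (hb : b ∈ S) :
    hull a b ⊆ S := sInter_subset_of_mem ⟨hS, ha, hb⟩

lemma left_mem_hull (a b : X) : a ∈ hull a b := fun _ h => h.2.1
lemma right_mem_hull (a b : X) : b ∈ hull a b := fun _ h => h.2.2
lemma hull_comm (a b : X) : hull a b = hull b a := by
  unfold hull; congr 1; ext S; simp only [mem_setOf_eq]; tauto
lemma hull_self (a : X) : hull a a = {a} :=
  Subset.antisymm (hull_subset isPreconnected_singleton rfl rfl)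
    (singleton_subset_iff.2 (left_mem_hull a a))
end hullbasic

section tl
variable {X : Type*} [MetricSpace X]

lemma TreeLike.param (T : TreeLike X) {a b : X} (h : a ≠ b) :
    ∃ γ : ℝ → X, ContinuousOn γ (Icc 0 1) ∧ InjOn γ (Icc 0 1) ∧
    γ 0 = a ∧ γ 1 = b ∧ hull a b = γ '' Icc 0 1 ∧
    ∀ s t, 0 ≤ s → s ≤ t → t ≤ 1 → hull (γ s) (γ t) = γ '' Icc s t := by
  obtain ⟨γ, hc, hi, h0, h1, hS⟩ := T.arc a b h
  have key : ∀ s t, 0 ≤ s → s ≤ t → t ≤ 1 → hull (γ s) (γ t) = γ '' Icc s t := by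
    intro s t hs hst ht
    have pc : ∀ u v, 0 ≤ u → v ≤ 1 → IsPreconnected (γ '' Icc u v) := fun u v hu hv =>
      isPreconnected_Icc.image _ (hc.mono (Icc_subset_Icc hu hv))
    apply Subset.antisymm
    · exact hull_subset (pc s t hs ht) (mem_image_of_mem _ (left_mem_Icc.2 hst))
        (mem_image_of_mem _ (right_mem_Icc.2 hst))
    · rintro _ ⟨r, hr, rfl⟩ S ⟨hSc, hsS, htS⟩
      have c1 : IsPreconnected (γ '' Icc 0 s ∪ S) :=
        (pc 0 s le_rfl (hst.trans ht)).union (γ s)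
          (mem_image_of_mem _ (right_mem_Icc.2 hs)) hsS hSc
      have c2 : IsPreconnected ((γ '' Icc 0 s ∪ S) ∪ γ '' Icc t 1) :=
        c1.union (γ t) (Or.inr htS) (mem_image_of_mem _ (left_mem_Icc.2 ht))
          (pc t 1 (hs.trans hst) le_rfl)
      have := hS _ c2 (Or.inl (Or.inl ⟨0, ⟨le_rfl, hs⟩, h0⟩)) (Or.inr ⟨1, ⟨ht, le_rfl⟩, h1⟩)
      have hr01 : r ∈ Icc (0:ℝ) 1 := ⟨hs.trans hr.1, hr.2.trans ht⟩
      rcases this (mem_image_of_mem γ hr01) with (⟨q, hq, hqr⟩ | h) | ⟨q, hq, hqr⟩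
      · have : q = r := hi ⟨hq.1, hq.2.trans (hst.trans ht)⟩ hr01 hqr
        subst this
        have : q = s := le_antisymm hq.2 hr.1
        subst this; exact hsS
      · exact h
      · have : q = r := hi ⟨(hs.trans hst).trans hq.1, hq.2⟩ hr01 hqr
        subst this
        have : q = t := le_antisymm hr.2 hq.1
        subst this; exact htS
  refine ⟨γ, hc, hi, h0, h1, ?_, key⟩
  rw [← h0, ← h1]; exact key 0 1 le_rfl zero_le_one le_rfl

lemma TreeLike.conn (T : TreeLike X) (a b : X) : IsPreconnected (hull a b) := by
  by_cases h : a = b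
  · subst h; rw [hull_self]; exact isPreconnected_singleton
  · obtain ⟨γ, hc, -, -, -, he, -⟩ := T.param h
    rw [he]; exact isPreconnected_Icc.image _ hc

lemma TreeLike.cpt (T : TreeLike X) (a b : X) : IsCompact (hull a b) := by
  by_cases h : a = b
  · subst h; rw [hull_self]; exact isCompact_singleton
  · obtain ⟨γ, hc, -, -, -, he, -⟩ := T.param h
    rw [he]; exact isCompact_Icc.image_of_continuousOn hc

lemma TreeLike.closed (T : TreeLike X) (a b : X) : IsClosed (hull a b) := (T.cpt a b).isClosed

lemma TreeLike.sub (T : TreeLike X) {a b c d : X} (hc : c ∈ hull a b) (hd : d ∈ hull a b) :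
    hull c d ⊆ hull a b := hull_subset (T.conn a b) hc hd

lemma TreeLike.subl (T : TreeLike X) {a b c : X} (hc : c ∈ hull a b) :
    hull a c ⊆ hull a b := T.sub (left_mem_hull _ _) hc

lemma TreeLike.union (T : TreeLike X) (a b c : X) : hull a b ⊆ hull a c ∪ hull c b :=
  hull_subset ((T.conn a c).union c (right_mem_hull _ _) (left_mem_hull _ _) (T.conn c b))
    (Or.inl (left_mem_hull _ _)) (Or.inr (right_mem_hull _ _))

lemma TreeLike.median (T : TreeLike X) (a b c : X) :
    ∃ m, m ∈ hull a b ∧ m ∈ hull a c ∧ m ∈ hull b c := by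
  have h := isPreconnected_closed_iff.1 (T.conn b c) (hull b a) (hull a c) (T.closed _ _)
    (T.closed _ _) (T.union b c a) ⟨b, left_mem_hull _ _, left_mem_hull _ _⟩
    ⟨c, right_mem_hull _ _, right_mem_hull _ _⟩
  obtain ⟨m, h1, h2, h3⟩ := h
  exact ⟨m, by rwa [hull_comm], h3, h1⟩

lemma TreeLike.inter (T : TreeLike X) {p b h x : X} (hh : h ∈ hull p b) (h1 : x ∈ hull p h)
    (h2 : x ∈ hull h b) : x = h := by
  by_cases hpb : p = b
  · subst hpb; rw [hull_self] at hh; rw [mem_singleton_iff] at hh; subst hh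
    rw [hull_self] at h1; exact h1
  obtain ⟨γ, hc, hi, h0, h1', he, hs⟩ := T.param hpb
  rw [he] at hh
  obtain ⟨t, ht, rfl⟩ := hh
  have e1 := hs 0 t le_rfl ht.1 ht.2
  have e2 := hs t 1 ht.1 ht.2 le_rfl
  rw [h0] at e1; rw [h1'] at e2; rw [e1] at h1; rw [e2] at h2
  obtain ⟨u, hu, rfl⟩ := h1
  obtain ⟨v, hv, hvu⟩ := h2
  have : v = u := hi ⟨ht.1.trans hv.1, hv.2⟩ ⟨hu.1, hu.2.trans ht.2⟩ hvu
  subst this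
  rw [le_antisymm hu.2 hv.1]

lemma TreeLike.antisymm (T : TreeLike X) {p x y : X} (h1 : x ∈ hull p y) (h2 : y ∈ hull p x) :
    x = y := (T.inter h1 h2 (right_mem_hull _ _)).symm

lemma TreeLike.linear (T : TreeLike X) {p a x y : X} (hx : x ∈ hull p a) (hy : y ∈ hull p a) :
    x ∈ hull p y ∨ y ∈ hull p x := by
  by_cases hpb : p = a
  · subst hpb; rw [hull_self] at hx; rw [mem_singleton_iff] at hx; subst hx
    exact Or.inl (left_mem_hull _ _)
  obtain ⟨γ, hc, hi, h0, h1', he, hs⟩ := T.param hpb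
  rw [he] at hx hy
  obtain ⟨s, hs', rfl⟩ := hx
  obtain ⟨t, ht, rfl⟩ := hy
  rw [← h0]
  rcases le_total s t with h | h
  · left; rw [hs 0 t le_rfl ht.1 ht.2]; exact ⟨s, ⟨hs'.1, h⟩, rfl⟩
  · right; rw [hs 0 s le_rfl hs'.1 hs'.2]; exact ⟨t, ⟨ht.1, h⟩, rfl⟩

lemma TreeLike.notmem (T : TreeLike X) {p b h : X} (hh : h ∈ hull p b) (hne : h ≠ p) :
    p ∉ hull h b := fun hp => hne (T.inter hh (left_mem_hull _ _) hp).symm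

lemma TreeLike.small (T : TreeLike X) {p a : X} (h : a ≠ p) {U : Set X} (hU : U ∈ 𝓝 p) :
    ∃ h ∈ hull p a, h ≠ p ∧ h ≠ a ∧ hull p h ⊆ U := by
  obtain ⟨γ, hc, hi, h0, h1, he, hs⟩ := T.param h.symm
  have hcont : ContinuousWithinAt γ (Icc 0 1) 0 := hc 0 (left_mem_Icc.2 zero_le_one)
  have : γ ⁻¹' U ∈ 𝓝[Icc 0 1] (0:ℝ) := hcont (by rwa [h0])
  rw [Metric.mem_nhdsWithin_iff] at this
  obtain ⟨ε, hε, hb⟩ := this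
  set t := min (ε/2) (1/2) with ht
  have t0 : 0 < t := by positivity
  have t1 : t ≤ 1/2 := min_le_right _ _
  have t2 : t ≤ ε/2 := min_le_left _ _
  have m0 : (0:ℝ) ∈ Icc (0:ℝ) 1 := by simp
  have m1 : (1:ℝ) ∈ Icc (0:ℝ) 1 := by simp
  have mt : t ∈ Icc (0:ℝ) 1 := ⟨t0.le, by linarith⟩
  refine ⟨γ t, ?_, ?_, ?_, ?_⟩
  · rw [he]; exact mem_image_of_mem _ mt
  · rw [← h0]; intro h; have := hi mt m0 h; linarith
  · rw [← h1]; intro h; have := hi mt m1 h; linarith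
  · have := hs 0 t le_rfl t0.le mt.2
    rw [h0] at this; rw [this]
    rintro _ ⟨s, hs, rfl⟩
    apply hb
    refine ⟨?_, hs.1, hs.2.trans mt.2⟩
    rw [Metric.mem_ball, Real.dist_eq, sub_zero, abs_of_nonneg hs.1]
    linarith [hs.2]

/-- shrinking a star -/
lemma TreeLike.star_shrink (T : TreeLike X) {p : X} {S : Finset X}
    (hS : (⋃ s ∈ S, hull p s) ∈ 𝓝 p) (a : X → X) (ha : ∀ s ∈ S, a s ∈ hull p s)
    (hap : ∀ s ∈ S, a s ≠ p) : (⋃ s ∈ S, hull p (a s)) ∈ 𝓝 p := by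
  have h1 : (⋂ s ∈ S, (hull (a s) s)ᶜ) ∈ 𝓝 p := by
    rw [Filter.biInter_finset_mem]
    intro s hs
    exact (T.closed _ _).isOpen_compl.mem_nhds (T.notmem (ha s hs) (hap s hs))
  filter_upwards [hS, h1] with x hx1 hx2
  simp only [mem_iUnion, exists_prop, mem_iInter] at *
  obtain ⟨s, hs, hxs⟩ := hx1
  refine ⟨s, hs, ?_⟩
  rcases T.union p s (a s) hxs with h | h
  · exact h
  · exact absurd h (hx2 s hs)

lemma TreeLike.star_conn (T : TreeLike X) (p : X) (S : Finset X) (a : X → X) (hS : S.Nonempty) :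
    IsPreconnected (⋃ s ∈ S, hull p (a s)) := by
  have : (⋃ s ∈ S, hull p (a s)) = ⋃₀ ((fun s => hull p (a s)) '' S) := by
    ext; simp
  rw [this]
  apply isPreconnected_sUnion p
  · rintro _ ⟨s, _, rfl⟩; exact left_mem_hull _ _
  · rintro _ ⟨s, _, rfl⟩; exact T.conn _ _

/-- small star neighbourhoods -/
lemma TreeLike.nbhd (T : TreeLike X) {p : X} {U : Set X} (hU : U ∈ 𝓝 p) :
    ∃ S : Finset X, (⋃ s ∈ S, hull p s) ∈ 𝓝 p ∧ (⋃ s ∈ S, hull p s) ⊆ U ∧ S.Nonempty := by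
  classical
  obtain ⟨S, hp, hS⟩ := T.star p
  have : ∀ s, ∃ a, s ∈ S → a ∈ hull p s ∧ a ≠ p ∧ hull p a ⊆ U := by
    intro s
    by_cases hs : s ∈ S
    · obtain ⟨h, h1, h2, h3, h4⟩ := T.small (p := p) (a := s) (by rintro rfl; exact hp hs) hU
      exact ⟨h, fun _ => ⟨h1, h2, h4⟩⟩
    · exact ⟨p, fun h => absurd h hs⟩
  choose a ha using this
  have hn := T.star_shrink hS a (fun s hs => (ha s hs).1) (fun s hs => (ha s hs).2.1)
  have he : (⋃ s ∈ S.image a, hull p s) = ⋃ s ∈ S, hull p (a s) := by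
    ext; simp
  refine ⟨S.image a, by rwa [he], ?_, ?_⟩
  · rw [he]; exact iUnion₂_subset fun s hs => (ha s hs).2.2
  · have := mem_of_mem_nhds hS
    simp only [mem_iUnion] at this
    obtain ⟨s, hs, _⟩ := this
    exact ⟨a s, Finset.mem_image_of_mem _ hs⟩

lemma TreeLike.local (T : TreeLike X) {p w : X} (hpw : p ≠ w) :
    ∃ N ∈ 𝓝 w, ∀ x ∈ N, w ∉ hull p x → x ∈ hull p w := by
  classical
  obtain ⟨S, hp, hS⟩ := T.star w
  have : ∀ s, ∃ a, s ∈ S → a ∈ hull w s ∧ a ≠ w ∧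
      ((∃ m ∈ hull w s, m ≠ w ∧ m ∈ hull w p) → a ∈ hull w p) := by
    intro s
    by_cases hs : s ∈ S
    · by_cases hm : ∃ m ∈ hull w s, m ≠ w ∧ m ∈ hull w p
      · obtain ⟨m, h1, h2, h3⟩ := hm
        exact ⟨m, fun _ => ⟨h1, h2, fun _ => h3⟩⟩
      · exact ⟨s, fun _ => ⟨right_mem_hull _ _, by rintro rfl; exact hp hs,
          fun h => absurd h hm⟩⟩
    · exact ⟨p, fun h => absurd h hs⟩
  choose a ha using this
  refine ⟨_, T.star_shrink hS a (fun s hs => (ha s hs).1) (fun s hs => (ha s hs).2.1), ?_⟩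
  intro x hx hw
  simp only [mem_iUnion, exists_prop] at hx
  obtain ⟨s, hs, hxs⟩ := hx
  obtain ⟨m, h1, h2, h3⟩ := T.median w p x
  have hmw : m ≠ w := by rintro rfl; exact hw h3
  have := (ha s hs).2.2 ⟨m, T.subl (ha s hs).1 (T.subl hxs h2), hmw, h1⟩
  rw [hull_comm]; exact T.subl this hxs
end tl

open Set Filter Topology Function
open scoped ENNReal

def HS {X : Type*} [TopologicalSpace X] (f : X → X) : Prop :=
  ∃ (S1 S2 : Set X) (n : ℕ), IsClosed S1 ∧ IsClosed S2 ∧ Disjoint S1 S2 ∧ S1.Nonempty ∧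
    S1 ∪ S2 ⊆ f^[n] '' S1 ∧ S1 ∪ S2 ⊆ f^[n] '' S2

lemma HS.of_iterate {X : Type*} [TopologicalSpace X] {f : X → X} {k : ℕ} (h : HS f^[k]) :
    HS f := by
  obtain ⟨S1, S2, n, h1, h2, h3, h4, h5, h6⟩ := h
  refine ⟨S1, S2, k * n, h1, h2, h3, h4, ?_, ?_⟩ <;> rwa [Function.iterate_mul]

lemma cov_iter {X : Type*} {g : X → X} {S A : Set X} (hS : S ⊆ A) (h : A ⊆ g '' S) (k : ℕ) :
    A ⊆ g^[k+1] '' S := by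
  induction k with
  | zero => simpa using h
  | succ k ih =>
    rw [Function.iterate_succ, image_comp]
    exact ih.trans (image_mono (hS.trans h))

lemma HSA {X : Type*} [TopologicalSpace X] {f : X → X} {A S1 S2 : Set X} {n1 n2 : ℕ}
    (hA : A.Nonempty) (c1 : IsClosed S1) (c2 : IsClosed S2) (hd : Disjoint S1 S2)
    (s1 : S1 ⊆ A) (s2 : S2 ⊆ A) (h1 : A ⊆ f^[n1] '' S1) (h2 : A ⊆ f^[n2] '' S2) : HS f := by
  have e1 : S1.Nonempty := by
    obtain ⟨a, ha⟩ := hA; obtain ⟨s, hs, -⟩ := h1 ha; exact ⟨s, hs⟩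
  have e2 : S2.Nonempty := by
    obtain ⟨a, ha⟩ := hA; obtain ⟨s, hs, -⟩ := h2 ha; exact ⟨s, hs⟩
  have k1 : n1 ≠ 0 := by
    rintro rfl
    simp at h1
    obtain ⟨s, hs⟩ := e2
    exact disjoint_left.1 hd (h1 (s2 hs)) hs
  have k2 : n2 ≠ 0 := by
    rintro rfl
    simp at h2
    obtain ⟨s, hs⟩ := e1
    exact disjoint_left.1 hd hs (h2 (s1 hs))
  refine ⟨S1, S2, n1 * n2, c1, c2, hd, e1, (union_subset s1 s2).trans ?_,
    (union_subset s1 s2).trans ?_⟩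
  · rw [Function.iterate_mul]
    obtain ⟨m, rfl⟩ := Nat.exists_eq_succ_of_ne_zero k2
    exact cov_iter s1 h1 m
  · rw [mul_comm, Function.iterate_mul]
    obtain ⟨m, rfl⟩ := Nat.exists_eq_succ_of_ne_zero k1
    exact cov_iter s2 h2 m

section dyn
variable {X : Type*} [MetricSpace X] {f : X → X}

lemma fix_iter {X : Type*} {f : X → X} {p : X} (hp : f p = p) (n : ℕ) : f^[n] p = p :=
  Function.iterate_fixed hp n

lemma TreeLike.img (T : TreeLike X) (hf : Continuous f) (n : ℕ) (a b : X) :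
    hull (f^[n] a) (f^[n] b) ⊆ f^[n] '' hull a b :=
  hull_subset ((T.conn a b).image _ (hf.iterate n).continuousOn)
    (mem_image_of_mem _ (left_mem_hull _ _)) (mem_image_of_mem _ (right_mem_hull _ _))

lemma TreeLike.cov (T : TreeLike X) (hf : Continuous f) {p : X} (hp : f p = p) {n : ℕ} {a b : X}
    (h : b ∈ f^[n] '' hull p a) : hull p b ⊆ f^[n] '' hull p a :=
  hull_subset ((T.conn p a).image _ (hf.iterate n).continuousOn)
    ⟨p, left_mem_hull _ _, fix_iter hp n⟩ h

lemma FL (T : TreeLike X) (hf : Continuous f) {p b b' : X} (hp : f p = p)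
    (h1 : ∀ a ∈ hull p b, a ≠ p → ∃ i, b ∈ f^[i] '' hull p a)
    {A : Set X} (hA : IsClosed A) (hAc : IsPreconnected A) (hAn : A.Nonempty) (hpA : p ∉ A) {J : ℕ}
    (hAJ : A ⊆ f^[J] '' hull p b) (hb' : b' ∈ hull p b) (hb'p : b' ≠ p)
    (h3 : ∀ U ∈ 𝓝 p, ∃ q, (∃ a ∈ A, f^[q] a ∈ U) ∧ (∃ a ∈ A, b' ∈ hull p (f^[q] a))) : HS f := by
  have key : ∀ c ∈ hull p b, c ≠ p → ∃ n, A ⊆ f^[n] '' hull p c := by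
    intro c hc hcp
    obtain ⟨i, hi⟩ := h1 c hc hcp
    refine ⟨J + i, ?_⟩
    rw [Function.iterate_add, image_comp]
    exact hAJ.trans (image_mono (T.cov hf hp hi))
  have key2 : ∀ c ∈ hull p b, c ≠ p → ∃ n, ∃ h ∈ hull p c, h ≠ p ∧ h ≠ c ∧ A ⊆ f^[n] '' hull h c := by
    intro c hc hcp
    obtain ⟨n, hn⟩ := key c hc hcp
    have hU : {x | f^[n] x ∈ Aᶜ} ∈ 𝓝 p := by
      apply (hf.iterate n).continuousAt.preimage_mem_nhds
      rw [fix_iter hp]; exact hA.isOpen_compl.mem_nhds hpA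
    obtain ⟨h, hh, hhp, hhc, hhU⟩ := T.small hcp hU
    refine ⟨n, h, hh, hhp, hhc, fun x hx => ?_⟩
    obtain ⟨y, hy, rfl⟩ := hn hx
    rcases T.union p c h hy with h' | h'
    · exact absurd hx (hhU h')
    · exact ⟨y, h', rfl⟩
  obtain ⟨n1, k1, k1m, k1p, k1b, hc1⟩ := key2 b' hb' hb'p
  obtain ⟨k2, k2m, k2p, k21, -⟩ := T.small k1p univ_mem
  have k1b' : k1 ∈ hull p b := T.subl hb' k1m
  have k2b : k2 ∈ hull p b := T.subl k1b' k2m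
  obtain ⟨n2, k3, k3m, k3p, k32, hc2⟩ := key2 k2 k2b k2p
  have k3k1 : k3 ∈ hull p k1 := T.subl k2m k3m
  have k3b : k3 ∈ hull p b' := T.subl k1m k3k1
  have hdis : Disjoint (hull k1 b') (hull k3 k2) := by
    rw [disjoint_left]
    intro x hx1 hx2
    have : x ∈ hull p k2 := T.sub k3m (right_mem_hull _ _) hx2
    have e := T.inter k1m (T.subl k2m this) hx1
    subst e
    exact k21 (T.antisymm k2m this)
  have hU : (hull k3 b')ᶜ ∈ 𝓝 p := (T.closed _ _).isOpen_compl.mem_nhds (T.notmem k3b k3p)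
  obtain ⟨S, hS, hSU, hSn⟩ := T.nbhd hU
  obtain ⟨q, ⟨a, haA, ha⟩, ⟨a', haA', ha'⟩⟩ := h3 _ hS
  have hbig : hull k3 b' ⊆ f^[q] '' A := by
    intro x hx
    have hx1 : x ∈ hull p (f^[q] a') := T.subl ha' (T.sub k3b (right_mem_hull _ _) hx)
    rcases T.union p (f^[q] a') (f^[q] a) hx1 with h | h
    · exfalso
      have hsc := T.star_conn p S id hSn
      have := hull_subset hsc (mem_of_mem_nhds hS) ha h
      exact hSU this hx
    · exact hull_subset (hAc.image _ (hf.iterate q).continuousOn) (mem_image_of_mem _ haA)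
        (mem_image_of_mem _ haA') h
  have s1 : hull k1 b' ⊆ hull k3 b' := by
    refine T.sub ?_ (right_mem_hull _ _)
    rcases T.union p b' k3 k1m with h | h
    · have : k1 = k3 := T.antisymm h k3k1
      subst this; exact left_mem_hull _ _
    · exact h
  have s2 : hull k3 k2 ⊆ hull k3 b' := by
    refine T.sub (left_mem_hull _ _) ?_
    rcases T.union p b' k3 (T.subl k1m k2m) with h | h
    · exact absurd (T.antisymm h k3m).symm k32
    · exact h
  have fin : ∀ H n, H ⊆ hull k3 b' → A ⊆ f^[n] '' H →
      A ⊆ f^[n+q] '' (A ∩ f^[q] ⁻¹' H) := by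
    intro H n hH hn x hx
    obtain ⟨y, hy, rfl⟩ := hn hx
    obtain ⟨z, hz, rfl⟩ := hbig (hH hy)
    exact ⟨z, ⟨hz, hy⟩, by rw [Function.iterate_add]; rfl⟩
  refine HSA hAn (hA.inter ((T.closed k1 b').preimage (hf.iterate q)))
    (hA.inter ((T.closed k3 k2).preimage (hf.iterate q))) ?_ inter_subset_left inter_subset_left
    (fin _ _ s1 hc1) (fin _ _ s2 hc2)
  exact ((hdis.preimage _).mono_left inter_subset_right).mono_right inter_subset_right

lemma HL (T : TreeLike X) (hf : Continuous f) {p t : X} (hp : f p = p) (htp : t ≠ p) {j : ℕ}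
    (hj : f^[j] t = p)
    (h1 : ∀ a ∈ hull p t, a ≠ p → ∃ i, t ∈ f^[i] '' hull p a) : HS f := by
  obtain ⟨a, ha, hap, hat, -⟩ := T.small htp univ_mem
  obtain ⟨i, hi⟩ := h1 a ha hap
  have i0 : i ≠ 0 := by
    rintro rfl
    simp at hi
    exact hat (T.antisymm ha hi)
  have c := cov_iter (T.subl ha) (T.cov hf hp hi) j
  rw [← Function.iterate_mul] at c
  obtain ⟨t', ht', e⟩ := c (right_mem_hull _ _)
  have e2 : f^[i * (j+1)] t = p := by
    have : i * (j+1) = (i*(j+1) - j) + j := by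
      have : j + 1 ≤ i * (j+1) := Nat.le_mul_of_pos_left _ (Nat.pos_of_ne_zero i0)
      omega
    rw [this, Function.iterate_add_apply, hj, fix_iter hp]
  have t'p : t' ≠ p := by
    rintro rfl; rw [fix_iter hp] at e; exact htp e.symm
  have t't : t' ∈ hull p t := T.subl ha ht'
  obtain ⟨a2, ha2, ha2p, ha2t, -⟩ := T.small t'p univ_mem
  obtain ⟨i2, hi2⟩ := h1 a2 (T.subl t't ha2) ha2p
  refine HSA (A := hull p t) ⟨p, left_mem_hull _ _⟩ (T.closed t' t) (T.closed p a2) ?_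
    (T.sub t't (right_mem_hull _ _)) (T.subl (T.subl t't ha2)) (n1 := i*(j+1)) (n2 := i2) ?_
    (T.cov hf hp hi2)
  · rw [disjoint_left]
    intro x hx1 hx2
    have := T.inter t't (T.subl ha2 hx2) hx1
    subst this
    exact ha2t (T.antisymm ha2 hx2)
  · have := T.img hf (i*(j+1)) t' t
    rwa [e, e2, hull_comm] at this
end dyn

open Set Filter Topology Function
open scoped ENNReal

lemma fin_trans {α : Type*} [Finite α] [Nonempty α] (r : α → α → Prop)
    (tr : ∀ a b c, r a b → r b c → r a c) (h : ∀ s, ∃ t, r s t) : ∃ t, r t t := by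
  by_contra hcon
  push Not at hcon
  let r' : α → α → Prop := fun a b => r b a
  have : IsTrans α r' := ⟨fun a b c h1 h2 => tr _ _ _ h2 h1⟩
  have : Std.Irrefl r' := ⟨fun a h => hcon a h⟩
  have wf := Finite.wellFounded_of_trans_of_irrefl r'
  obtain ⟨m, -, hm⟩ := wf.has_min univ univ_nonempty
  obtain ⟨t, ht⟩ := h m
  exact hm t trivial ht

section dyn
variable {X : Type*} [MetricSpace X] {f : X → X}

lemma digraphE (T : TreeLike X) (hf : Continuous f) {p w : X} (hp : f p = p) (hwp : w ≠ p)
    (hr : ∀ U ∈ 𝓝 p, ∀ W ∈ 𝓝 w, ∃ k, ∃ u ∈ U, f^[k] u ∈ W) :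
    ∃ b, b ≠ p ∧ (∀ a ∈ hull p b, a ≠ p → ∃ i, 1 ≤ i ∧ b ∈ f^[i] '' hull p a) ∧
      w ∈ closure (⋃ i, f^[i] '' hull p b) := by
  classical
  obtain ⟨S, hpS, hS⟩ := T.star p
  have hne : ∀ s ∈ S, s ≠ p := fun s hs h => hpS (h ▸ hs)
  let G : X → Prop := fun s => ∀ a ∈ hull p s, a ≠ p → ∀ W ∈ 𝓝 w, ∃ i, ∃ u ∈ hull p a, f^[i] u ∈ W
  let r : X → X → Prop := fun s t => ∃ b ∈ hull p t, b ≠ p ∧ ∀ a ∈ hull p s, a ≠ p →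
    ∃ i, 1 ≤ i ∧ b ∈ f^[i] '' hull p a
  have hA : ∀ t, ∃ a, ∃ W ∈ 𝓝 w, t ∈ S → (a ∈ hull p t ∧ a ≠ p ∧ w ∉ hull p a ∧
      (¬ G t → ∀ i, ∀ u ∈ hull p a, f^[i] u ∉ W)) := by
    intro t
    by_cases ht : t ∈ S
    · have hcw : ({w}ᶜ : Set X) ∈ 𝓝 p := isOpen_compl_singleton.mem_nhds (by simpa using hwp.symm)
      by_cases hG : G t
      · obtain ⟨a, h1, h2, -, h3⟩ := T.small (hne t ht) hcw
        exact ⟨a, univ, univ_mem, fun _ => ⟨h1, h2, fun h => h3 h rfl, fun h => absurd hG h⟩⟩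
      · have hG' := hG
        simp only [G] at hG'
        push Not at hG'
        obtain ⟨a0, ha0, ha0p, W, hW, hh⟩ := hG'
        obtain ⟨a, h1, h2, -, h3⟩ := T.small ha0p hcw
        exact ⟨a, W, hW, fun _ => ⟨T.subl ha0 h1, h2, fun h => h3 h rfl,
          fun _ i u hu => hh i u (T.subl h1 hu)⟩⟩
    · exact ⟨p, univ, univ_mem, fun h => absurd h ht⟩
  choose a W hW ha using hA
  have hN : (⋃ s ∈ S, hull p (a s)) ∈ 𝓝 p :=
    T.star_shrink hS a (fun s hs => (ha s hs).1) (fun s hs => (ha s hs).2.1)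
  have hWW : (⋂ s ∈ S, W s) ∈ 𝓝 w := (Filter.biInter_finset_mem S).2 fun s _ => hW s
  have hGne : ∃ s ∈ S, G s := by
    by_contra hcon
    push Not at hcon
    obtain ⟨k, u, hu, hk⟩ := hr _ hN _ hWW
    simp only [mem_iUnion] at hu
    obtain ⟨s, hs, hu⟩ := hu
    exact (ha s hs).2.2.2 (hcon s hs) k u hu (mem_iInter₂.1 hk s hs)
  have hstep : ∀ s ∈ S, G s → ∃ t ∈ S, G t ∧ r s t := by
    intro s hs hGs
    by_contra hcon
    push Not at hcon
    have hB : ∀ t, ∃ b, t ∈ S → (b ∈ hull p (a t) ∧ b ≠ p ∧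
        hull p b ⊆ f ⁻¹' (⋃ s ∈ S, hull p (a s))) := by
      intro t
      by_cases ht : t ∈ S
      · have : f ⁻¹' (⋃ s ∈ S, hull p (a s)) ∈ 𝓝 p :=
          hf.continuousAt.preimage_mem_nhds (by rwa [hp])
        obtain ⟨b, h1, h2, -, h3⟩ := T.small (ha t ht).2.1 this
        exact ⟨b, fun _ => ⟨h1, h2, h3⟩⟩
      · exact ⟨p, fun h => absurd h ht⟩
    choose b hb using hB
    have hα : ∀ t, ∃ α, t ∈ S → (α ∈ hull p s ∧ α ≠ p ∧
        (G t → ∀ i, 1 ≤ i → b t ∉ f^[i] '' hull p α)) := by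
      intro t
      by_cases ht : t ∈ S
      · by_cases hG : G t
        · have := hcon t ht hG
          simp only [r] at this
          push Not at this
          obtain ⟨α, h1, h2, h3⟩ := this (b t) (T.subl (ha t ht).1 (hb t ht).1) (hb t ht).2.1
          exact ⟨α, fun _ => ⟨h1, h2, fun _ => h3⟩⟩
        · exact ⟨s, fun _ => ⟨right_mem_hull _ _, hne s hs, fun h => absurd h hG⟩⟩
      · exact ⟨p, fun h => absurd h ht⟩
    choose α hα using hα
    have hbs : b s ∈ hull p s := T.subl (ha s hs).1 (hb s hs).1
    have hU : (⋂ t ∈ S, (hull (α t) s)ᶜ) ∩ (hull (b s) s)ᶜ ∈ 𝓝 p := by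
      refine inter_mem ((Filter.biInter_finset_mem S).2 fun t ht => ?_) ?_
      · exact (T.closed _ _).isOpen_compl.mem_nhds (T.notmem (hα t ht).1 (hα t ht).2.1)
      · exact (T.closed _ _).isOpen_compl.mem_nhds (T.notmem hbs (hb s hs).2.1)
    obtain ⟨c, hc, hcp, -, hcU⟩ := T.small (hne s hs) hU
    have hcU' := hcU (right_mem_hull _ _)
    have hc1 : c ∈ hull p (b s) := (T.union p s (b s) hc).resolve_right hcU'.2
    have hc2 : ∀ t ∈ S, c ∈ hull p (α t) := fun t ht =>
      (T.union p s (α t) hc).resolve_right (mem_iInter₂.1 hcU'.1 t ht)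
    have hcl : IsClosed (⋃ s ∈ S, hull p (a s)) := by
      have := Set.Finite.isClosed_biUnion S.finite_toSet (fun i _ => T.closed p (a i))
      simpa using this
    have hwN : w ∉ (⋃ s ∈ S, hull p (a s)) := by
      simp only [mem_iUnion, not_exists]
      exact fun t ht => (ha t ht).2.2.1
    obtain ⟨i, u, hu, hi⟩ := hGs c hc hcp _ (inter_mem hWW (hcl.isOpen_compl.mem_nhds hwN))
    have hex : ∃ n, f^[n] u ∉ ⋃ t ∈ S, hull p (b t) := by
      refine ⟨i, fun h => hi.2 ?_⟩
      simp only [mem_iUnion] at h ⊢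
      obtain ⟨t, ht, h⟩ := h
      exact ⟨t, ht, T.subl (hb t ht).1 h⟩
    have hmin := fun m => @Nat.find_min _ _ hex m
    have hspec := Nat.find_spec hex
    have hle : Nat.find hex ≤ i := by
      apply Nat.find_min'
      intro h; apply hi.2
      simp only [mem_iUnion] at h ⊢
      obtain ⟨t, ht, h⟩ := h
      exact ⟨t, ht, T.subl (hb t ht).1 h⟩
    generalize Nat.find hex = τ at hmin hspec hle
    have hτ : τ ≠ 0 := by
      rintro rfl
      apply hspec
      simp only [mem_iUnion]
      exact ⟨s, hs, T.subl hc1 hu⟩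
    obtain ⟨τ', rfl⟩ := Nat.exists_eq_succ_of_ne_zero hτ
    have h1 := not_not.1 (hmin τ' (Nat.lt_succ_self _))
    simp only [mem_iUnion] at h1
    obtain ⟨t0, ht0, h1⟩ := h1
    have h2 := (hb t0 ht0).2.2 h1
    rw [mem_preimage, ← Function.iterate_succ_apply' f] at h2
    simp only [mem_iUnion] at h2
    obtain ⟨t, ht, h2⟩ := h2
    have h3 : f^[τ'.succ] u ∉ hull p (b t) := fun h => hspec (by
      simp only [mem_iUnion]; exact ⟨t, ht, h⟩)
    have h4 : b t ∈ hull p (f^[τ'.succ] u) := (T.linear h2 (hb t ht).1).resolve_left h3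
    by_cases hG : G t
    · apply (hα t ht).2.2 hG τ'.succ (by omega)
      exact T.cov hf hp ⟨u, T.subl (hc2 t ht) hu, rfl⟩ h4
    · apply (ha t ht).2.2.2 hG (i - τ'.succ) _ h2
      rw [← Function.iterate_add_apply, Nat.sub_add_cancel hle]
      exact mem_iInter₂.1 hi.1 t ht
  have hfin : ∃ t : {s // s ∈ S ∧ G s}, r t.1 t.1 := by
    obtain ⟨s0, hs0, hG0⟩ := hGne
    have : Nonempty {s // s ∈ S ∧ G s} := ⟨⟨s0, hs0, hG0⟩⟩
    have : Finite {s // s ∈ S ∧ G s} :=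
      Set.Finite.subset S.finite_toSet (fun s (hs : s ∈ S ∧ G s) => hs.1)
    refine fin_trans (α := {s // s ∈ S ∧ G s}) (fun s t => r s.1 t.1) ?_ ?_
    · rintro ⟨s, _⟩ ⟨t, _⟩ ⟨v, _⟩ ⟨b, hb, hbp, h⟩ ⟨c, hc, hcp, h'⟩
      refine ⟨c, hc, hcp, fun x hx hxp => ?_⟩
      obtain ⟨i, hi, h1⟩ := h x hx hxp
      obtain ⟨j, hj, h2⟩ := h' b hb hbp
      refine ⟨j + i, by omega, ?_⟩
      rw [Function.iterate_add, image_comp]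
      exact image_mono (T.cov hf hp h1) h2
    · rintro ⟨s, hs, hG⟩
      obtain ⟨t, ht, hGt, hr⟩ := hstep s hs hG
      exact ⟨⟨t, ht, hGt⟩, hr⟩
  obtain ⟨⟨t, htS, htG⟩, b, hb, hbp, hrb⟩ := hfin
  refine ⟨b, hbp, fun a ha hap => hrb a (T.subl hb ha) hap, ?_⟩
  rw [mem_closure_iff_nhds]
  intro W hW
  obtain ⟨i, u, hu, h⟩ := htG b hb hbp W hW
  exact ⟨f^[i] u, h, mem_iUnion.2 ⟨i, mem_image_of_mem _ hu⟩⟩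
end dyn

open Set Filter Topology Function
open scoped ENNReal

section dyn
variable {X : Type*} [MetricSpace X] {f : X → X}

lemma lemP [CompactSpace X] (hf : Continuous f) {C : Set X} (hC : f '' C = C)
    (hQ : (closure C \ C).Finite) :
    (∀ z ∈ closure C, f z ∈ closure C \ C → z ∈ closure C \ C) ∧
    f '' (closure C \ C) = closure C \ C ∧ InjOn f (closure C \ C) := by
  have hcl : f '' closure C = closure C := by
    rw [image_closure_of_isCompact isClosed_closure.isCompact hf.continuousOn, hC]
  have h1 : ∀ z ∈ closure C, f z ∈ closure C \ C → z ∈ closure C \ C := by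
    intro z hz h
    refine ⟨hz, fun hzC => h.2 ?_⟩
    rw [← hC]; exact mem_image_of_mem _ hzC
  have h2 : closure C \ C ⊆ f '' (closure C \ C) := by
    intro z hz
    obtain ⟨y, hy, rfl⟩ := hcl.symm ▸ hz.1
    exact ⟨y, h1 y hy hz, rfl⟩
  have h3 : f '' (closure C \ C) = closure C \ C := by
    refine (Set.eq_of_subset_of_ncard_le h2 (Set.ncard_image_le hQ) (hQ.image _)).symm
  refine ⟨h1, h3, ?_⟩
  exact Set.injOn_of_ncard_image_eq (by rw [h3]) hQ

structure TGerm (f : X → X) (p b : X) : Prop where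
  fix : f p = p
  ne : b ≠ p
  self : b ∈ f '' hull p b
  cov : ∀ a ∈ hull p b, a ≠ p → ∃ j, b ∈ f^[j] '' hull p a
  esc : ∀ z ∈ hull p b, z ≠ p → ∀ j, f^[j] z ≠ p

def DD (f : X → X) (p b : X) : Set X := ⋃ j, f^[j] '' hull p b

lemma TGerm.step (T : TreeLike X) (hf : Continuous f) {p b : X} (g : TGerm f p b) (j : ℕ) :
    f^[j] '' hull p b ⊆ f^[j+1] '' hull p b := by
  rw [Function.iterate_add, image_comp]
  exact image_mono (T.cov hf g.fix (n := 1) g.self)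

lemma TGerm.mono (T : TreeLike X) (hf : Continuous f) {p b : X} (g : TGerm f p b) :
    Monotone (fun j => f^[j] '' hull p b) := monotone_nat_of_le_succ (g.step T hf)

lemma TGerm.hull_sub (p b : X) : hull p b ⊆ DD f p b :=
  fun x hx => mem_iUnion.2 ⟨0, x, hx, rfl⟩

lemma TGerm.image_sub (p b : X) (n : ℕ) : f^[n] '' DD f p b ⊆ DD f p b := by
  rintro _ ⟨x, hx, rfl⟩
  obtain ⟨j, z, hz, rfl⟩ := mem_iUnion.1 hx
  exact mem_iUnion.2 ⟨n + j, z, hz, Function.iterate_add_apply _ _ _ _⟩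

lemma TGerm.image (T : TreeLike X) (hf : Continuous f) {p b : X} (g : TGerm f p b) :
    f '' DD f p b = DD f p b := by
  refine Subset.antisymm (TGerm.image_sub p b 1) ?_
  intro x hx
  obtain ⟨j, hj⟩ := mem_iUnion.1 hx
  have := g.step T hf j hj
  rw [Function.iterate_succ', image_comp] at this
  exact image_mono (subset_iUnion _ j) this

lemma TGerm.conn (T : TreeLike X) (hf : Continuous f) {p b : X} (g : TGerm f p b) :
    IsPreconnected (DD f p b) :=
  isPreconnected_iUnion ⟨p, mem_iInter.2 fun j => ⟨p, left_mem_hull _ _, fix_iter g.fix j⟩⟩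
    fun j => (T.conn p b).image _ (hf.iterate j).continuousOn

lemma TGerm.sub (T : TreeLike X) (hf : Continuous f) {p b : X} (g : TGerm f p b) {a : X}
    (ha : a ∈ hull p b) (hap : a ≠ p) {z : X} (hz : z ∈ DD f p b) : ∃ n, z ∈ f^[n] '' hull p a := by
  obtain ⟨j, hj⟩ := mem_iUnion.1 hz
  obtain ⟨i, hi⟩ := g.cov a ha hap
  refine ⟨j + i, ?_⟩
  rw [Function.iterate_add, image_comp]
  exact image_mono (T.cov hf g.fix hi) hj

lemma TreeLike.conn_diff (T : TreeLike X) {p b : X} (h : b ≠ p) : IsPreconnected (hull p b \ {p}) := by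
  obtain ⟨γ, hc, hi, h0, h1, he, -⟩ := T.param h.symm
  have : hull p b \ {p} = γ '' Ioc 0 1 := by
    rw [he]
    ext x
    constructor
    · rintro ⟨⟨s, hs, rfl⟩, hx⟩
      refine ⟨s, ⟨lt_of_le_of_ne hs.1 ?_, hs.2⟩, rfl⟩
      rintro rfl; exact hx h0
    · rintro ⟨s, hs, rfl⟩
      refine ⟨⟨s, ⟨hs.1.le, hs.2⟩, rfl⟩, fun hx => ?_⟩
      rw [mem_singleton_iff, ← h0] at hx
      exact hs.1.ne' (hi ⟨hs.1.le, hs.2⟩ (by simp) hx)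
  rw [this]
  exact isPreconnected_Ioc.image _ (hc.mono Ioc_subset_Icc_self)

lemma TGerm.conn_diff (T : TreeLike X) (hf : Continuous f) {p b : X} (g : TGerm f p b) :
    IsPreconnected (DD f p b \ {p}) := by
  have : DD f p b \ {p} = ⋃ j, f^[j] '' (hull p b \ {p}) := by
    ext x
    constructor
    · rintro ⟨hx, hxp⟩
      obtain ⟨j, z, hz, rfl⟩ := mem_iUnion.1 hx
      refine mem_iUnion.2 ⟨j, z, ⟨hz, ?_⟩, rfl⟩
      rintro rfl
      exact hxp (fix_iter g.fix j)
    · intro hx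
      obtain ⟨j, z, hz, rfl⟩ := mem_iUnion.1 hx
      exact ⟨mem_iUnion.2 ⟨j, z, hz.1, rfl⟩, g.esc z hz.1 hz.2 j⟩
  rw [this]
  refine isPreconnected_iUnion ⟨b, mem_iInter.2 fun j => ?_⟩
    fun j => (T.conn_diff g.ne).image _ (hf.iterate j).continuousOn
  obtain ⟨z, hz, e⟩ := g.mono T hf (Nat.zero_le j) ⟨b, right_mem_hull _ _, rfl⟩
  refine ⟨z, ⟨hz, ?_⟩, e⟩
  rintro rfl
  exact g.ne (by rw [← fix_iter g.fix j]; exact e.symm)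

lemma TGerm.pow (T : TreeLike X) (hf : Continuous f) {p b : X} (g : TGerm f p b) {n : ℕ} (hn : 1 ≤ n) :
    TGerm f^[n] p b ∧ DD f^[n] p b = DD f p b := by
  refine ⟨⟨fix_iter g.fix n, g.ne, ?_, ?_, ?_⟩, ?_⟩
  · exact g.mono T hf (Nat.zero_le n) ⟨b, right_mem_hull _ _, rfl⟩
  · intro a ha hap
    obtain ⟨j, hj⟩ := g.cov a ha hap
    refine ⟨j, ?_⟩
    rw [← Function.iterate_mul]
    have : n * j = (n-1)*j + j := by
      obtain ⟨m, rfl⟩ := Nat.exists_eq_add_of_le hn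
      rw [Nat.add_sub_cancel_left]; ring
    rw [this, Function.iterate_add, image_comp]
    exact image_mono (T.cov hf g.fix hj)
      (g.mono T hf (Nat.zero_le ((n-1)*j)) ⟨b, right_mem_hull _ _, rfl⟩)
  · intro z hz hzp j
    rw [← Function.iterate_mul]; exact g.esc z hz hzp _
  · apply Subset.antisymm
    · refine iUnion_subset fun j => ?_
      rw [← Function.iterate_mul]; exact subset_iUnion (fun j => f^[j] '' hull p b) _
    · refine iUnion_subset fun j => ?_
      refine Subset.trans ?_ (subset_iUnion (fun j => (f^[n])^[j] '' hull p b) j)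
      rw [← Function.iterate_mul]
      exact g.mono T hf (Nat.le_mul_of_pos_left _ hn)

lemma lemSL [CompactSpace X] (T : TreeLike X) (hf : Continuous f) (hHS : ¬ HS f) {p w : X} (hp : f p = p)
    (hwp : w ≠ p)
    (hr : ∀ U ∈ 𝓝 p, ∀ W ∈ 𝓝 w, ∃ k, ∃ u ∈ U, f^[k] u ∈ W) :
    ∃ i0 b, 1 ≤ i0 ∧ TGerm f^[i0] p b ∧ (∃ m, f^[m] w ∈ closure (DD f^[i0] p b)) ∧
      ∀ n, f^[n] w ≠ p := by
  obtain ⟨b, hbp, hcov, hw⟩ := digraphE T hf hp hwp hr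
  obtain ⟨i0, hi0, hself⟩ := hcov b (right_mem_hull _ _) hbp
  have hesc : ∀ z ∈ hull p b, z ≠ p → ∀ j, f^[j] z ≠ p := by
    intro z hz hzp j hj
    refine hHS (HL T hf hp hzp hj fun a ha hap => ?_)
    obtain ⟨i, -, hi⟩ := hcov a (T.subl hz ha) hap
    exact ⟨i, T.cov hf hp hi hz⟩
  have g : TGerm f^[i0] p b := by
    refine ⟨fix_iter hp _, hbp, hself, ?_, ?_⟩
    · intro a ha hap
      obtain ⟨i, -, hi⟩ := hcov a ha hap
      refine ⟨i, ?_⟩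
      obtain ⟨k, rfl⟩ : ∃ k, i0 = k + 1 := ⟨i0 - 1, by omega⟩
      have := cov_iter (T.subl ha) (T.cov hf hp hi) k
      rw [← Function.iterate_mul, mul_comm, Function.iterate_mul] at this
      exact this (right_mem_hull _ _)
    · intro z hz hzp j
      rw [← Function.iterate_mul]; exact hesc z hz hzp _
  have hfi := hf.iterate i0
  refine ⟨i0, b, hi0, g, ?_, ?_⟩
  · have hsub : (⋃ i, f^[i] '' hull p b) ⊆ ⋃ r ∈ Finset.range i0, f^[r] '' DD f^[i0] p b := by
      refine iUnion_subset fun i => ?_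
      have e : i = i % i0 + i0 * (i / i0) := (Nat.mod_add_div i i0).symm
      refine Subset.trans ?_ (subset_biUnion_of_mem (u := fun r => f^[r] '' DD f^[i0] p b)
        (x := i % i0) (Finset.mem_coe.2 (Finset.mem_range.2 (Nat.mod_lt i hi0))))
      conv_lhs => rw [e, Function.iterate_add, image_comp]
      refine image_mono ?_
      rw [Function.iterate_mul]
      exact subset_iUnion (fun j => (f^[i0])^[j] '' hull p b) _
    have hw2 := closure_mono hsub hw
    rw [Finset.closure_biUnion] at hw2
    simp only [mem_iUnion] at hw2
    obtain ⟨r, hr, hw2⟩ := hw2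
    have hr' := Finset.mem_range.1 hr
    refine ⟨i0 - r, ?_⟩
    have := image_closure_subset_closure_image (hf.iterate (i0 - r)) (mem_image_of_mem _ hw2)
    rw [← image_comp, ← Function.iterate_add, Nat.sub_add_cancel hr'.le, g.image T hfi] at this
    exact this
  · set C := ⋃ i, f^[i] '' hull p b with hCdef
    intro n
    by_cases hwC : w ∈ C
    · obtain ⟨i, z, hz, rfl⟩ := mem_iUnion.1 hwC
      rw [← Function.iterate_add_apply]
      refine hesc z hz ?_ _
      rintro rfl
      exact hwp (fix_iter hp i)
    · have hCc : IsPreconnected C :=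
        isPreconnected_iUnion ⟨p, mem_iInter.2 fun j => ⟨p, left_mem_hull _ _, fix_iter hp j⟩⟩
          fun j => (T.conn p b).image _ (hf.iterate j).continuousOn
      have hCi : f '' C = C := by
        rw [hCdef, image_iUnion]
        apply Subset.antisymm
        · refine iUnion_subset fun i => ?_
          rw [← image_comp, ← Function.iterate_succ']
          exact subset_iUnion (fun j => f^[j] '' hull p b) _
        · refine iUnion_subset fun i => ?_
          refine Subset.trans ?_ (subset_iUnion (fun j => f '' (f^[j] '' hull p b)) (i + (i0 - 1)))
          rw [← image_comp, ← Function.iterate_succ', show (i + (i0-1)).succ = i + i0 by omega,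
            Function.iterate_add, image_comp]
          exact image_mono (T.cov hf hp hself)
      obtain ⟨F, hF, -, hF2⟩ := T.fin C hCc
      have hQ : (closure C \ C).Finite := hF.subset fun x hx => by
        by_contra h; exact hx.2 (hF2 ⟨hx.1, h⟩)
      obtain ⟨-, hQi, -⟩ := lemP hf hCi hQ
      have hmaps : MapsTo f (closure C \ C) (closure C \ C) := mapsTo_iff_image_subset.2 hQi.le
      intro h
      have h2 := hmaps.iterate n ⟨hw, hwC⟩
      rw [h] at h2
      exact h2.2 (mem_iUnion.2 ⟨0, p, left_mem_hull _ _, rfl⟩)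
end dyn

open Set Filter Topology Function
open scoped ENNReal

section dyn
variable {X : Type*} [MetricSpace X] {f : X → X}

lemma lemA1 (T : TreeLike X) (hf : Continuous f) {p w b : X} (hpw : p ≠ w) (g : TGerm f p b)
    (hw : w ∈ closure (DD f p b)) :
    ∃ b1 ∈ hull p b, b1 ∈ hull p w ∧ b1 ≠ p ∧ b1 ≠ w ∧ ∀ x ∈ hull p w, x ≠ w → x ∈ DD f p b := by
  have hw2 : w ∈ closure (DD f p b \ {p}) := by
    rw [mem_closure_iff_nhds] at hw ⊢
    intro U hU
    obtain ⟨x, hx, hxD⟩ := hw _ (inter_mem hU (isOpen_compl_singleton.mem_nhds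
      (show w ∈ ({p}ᶜ : Set X) from hpw.symm)))
    exact ⟨x, hx.1, hxD, hx.2⟩
  have c1 : IsPreconnected (insert w (DD f p b \ {p})) :=
    (g.conn_diff T hf).subset_closure (subset_insert _ _) (insert_subset hw2 subset_closure)
  have c2 : IsPreconnected (insert w (DD f p b)) :=
    (g.conn T hf).subset_closure (subset_insert _ _) (insert_subset hw subset_closure)
  have hpD : p ∈ DD f p b := TGerm.hull_sub p b (left_mem_hull _ _)
  have hbD : b ∈ DD f p b := TGerm.hull_sub p b (right_mem_hull _ _)
  obtain ⟨m, m1, m2, m3⟩ := T.median p b w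
  have hmp : m ≠ p := by
    rintro rfl
    rcases hull_subset c1 (Or.inr ⟨hbD, g.ne⟩) (Or.inl rfl) m3 with h | h
    · exact hpw h
    · exact h.2 rfl
  obtain ⟨b1, k1, k2, k3, -⟩ := T.small hmp univ_mem
  refine ⟨b1, T.subl m1 k1, T.subl m2 k1, k2, ?_, ?_⟩
  · rintro rfl
    exact k3 (T.antisymm k1 m2)
  · intro x hx hxw
    exact (hull_subset c2 (Or.inr hpD) (Or.inl rfl) hx).resolve_left hxw

lemma caseA [CompactSpace X] (T : TreeLike X) (hf : Continuous f) (hHS : ¬ HS f) {p w b b' : X}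
    (hpw : p ≠ w) (g : TGerm f p b) (g' : TGerm f w b')
    (hw : w ∈ closure (DD f p b)) (hp : p ∈ closure (DD f w b')) : False := by
  obtain ⟨b1, b1b, b1w, b1p, b1nw, hID⟩ := lemA1 T hf hpw g hw
  obtain ⟨b2, b2b, b2p, b2w, b2np, hID'⟩ := lemA1 T hf hpw.symm g' hp
  rw [hull_comm] at hID'
  have hwb1 : w ∉ hull p b1 := fun h => b1nw (T.antisymm b1w h)
  have hwD : w ∉ DD f p b := by
    intro h
    obtain ⟨i, h, hh, e⟩ := g.sub T hf b1b b1p h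
    have hhp : h ≠ p := by
      rintro rfl; rw [fix_iter g.fix] at e; exact hpw e
    have hhw : h ≠ w := by
      rintro rfl; exact hwb1 hh
    obtain ⟨j, z, hz, e2⟩ := mem_iUnion.1 (hID' h (T.subl b1w hh) hhp)
    have hzw : z ≠ w := by
      rintro rfl; rw [fix_iter g'.fix] at e2; exact hhw e2.symm
    apply g'.esc z hz hzw (i + j)
    rw [Function.iterate_add_apply, e2, e]
  have hDi := g.image T hf
  have hDc := g.conn T hf
  obtain ⟨F, hF, -, hF2⟩ := T.fin _ hDc
  have hQ : (closure (DD f p b) \ DD f p b).Finite := hF.subset fun x hx => by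
    by_contra h; exact hx.2 (hF2 ⟨hx.1, h⟩)
  obtain ⟨hP1, -, hP3⟩ := lemP hf hDi hQ
  have hKK : ∀ n, ∀ x ∈ closure (DD f p b), f^[n] x ∈ closure (DD f p b) := by
    intro n x hx
    have := image_closure_subset_closure_image (hf.iterate n) (mem_image_of_mem _ hx)
    exact closure_mono (TGerm.image_sub p b n) this
  have hsubK : DD f p b ⊆ closure (DD f p b) := subset_closure
  have hDsub : ∀ {x}, x ∈ DD f p b → hull p x ⊆ DD f p b := fun hx =>
    hull_subset hDc (TGerm.hull_sub p b (left_mem_hull _ _)) hx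
  have hDfin : ∀ {a z}, a ∈ hull p b → a ≠ p → z ∈ DD f p b → ∃ n, z ∈ f^[n] '' hull p a :=
    fun ha hap hz => g.sub T hf ha hap hz
  have hDJ : ∀ {z}, z ∈ DD f p b → ∃ J, z ∈ f^[J] '' hull p b := fun hz => mem_iUnion.1 hz
  generalize DD f p b = D at *
  have hL1 : ∀ z ∈ closure D, f z = w → z = w := by
    intro z hz h
    have hz2 := hP1 z hz (h.symm ▸ ⟨hw, hwD⟩)
    exact hP3 hz2 ⟨hw, hwD⟩ (h.trans g'.fix.symm)
  have hL1' : ∀ n, ∀ z ∈ closure D, f^[n] z = w → z = w := by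
    intro n
    induction n with
    | zero => intro z _ h; exact h
    | succ n ih =>
      intro z hz h
      exact hL1 z hz (ih _ (hKK 1 z hz) h)
  obtain ⟨N0, hN0, hN0l⟩ := T.local hpw
  obtain ⟨N, hN, hNc, hNsub⟩ : ∃ N ∈ 𝓝 w, IsClosed N ∧
      N ⊆ N0 ∩ (hull p b1)ᶜ ∩ ((closure D \ D) \ {w})ᶜ := by
    apply exists_mem_nhds_isClosed_subset
    refine inter_mem (inter_mem hN0 ((T.closed _ _).isOpen_compl.mem_nhds hwb1)) ?_
    exact (hQ.subset sdiff_subset).isClosed.isOpen_compl.mem_nhds (fun h => h.2 rfl)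
  have hNb1 : ∀ x ∈ N, x ∉ hull p b1 := fun x hx => (hNsub hx).1.2
  have hNK : ∀ x ∈ N, x ∈ closure D → x ∈ hull p w := by
    intro x hx hxK
    by_cases hxw : x = w
    · subst hxw; exact right_mem_hull _ _
    · have hxD : x ∈ D := by
        by_contra h
        exact (hNsub hx).2 ⟨⟨hxK, h⟩, hxw⟩
      exact hN0l x (hNsub hx).1.1 fun h => hwD (hDsub hxD h)
  have hNKb : ∀ x ∈ N, x ∈ closure D → b1 ∈ hull p x := fun x hx hxK =>
    (T.linear b1w (hNK x hx hxK)).resolve_right (hNb1 x hx)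
  have hwi : w ∈ interior N := mem_interior_iff_mem_nhds.2 hN
  -- the pin
  obtain ⟨gs, hgsK, hgsw, hgsN⟩ : ∃ gs ∈ closure D, gs ≠ w ∧ ∀ i, f^[i] gs ∈ N := by
    have hBc : IsCompact (closure D \ interior N) :=
      (isClosed_closure.sdiff isOpen_interior).isCompact
    have hne := IsCompact.nonempty_iInter_of_sequence_nonempty_isCompact_isClosed
      (fun j => {x ∈ f '' (closure D \ interior N) | ∀ i ≤ j, f^[i] x ∈ N}) ?_ ?_ ?_ ?_
    · obtain ⟨x, hx⟩ := hne
      rw [mem_iInter] at hx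
      obtain ⟨z, hz, e⟩ := (hx 0).1
      refine ⟨x, e ▸ hKK 1 z hz.1, ?_, fun i => (hx i).2 i le_rfl⟩
      rintro rfl
      have := hL1 z hz.1 e
      subst this
      exact hz.2 hwi
    · intro j x hx
      exact ⟨hx.1, fun i hi => hx.2 i (by omega)⟩
    · intro j
      have hWo : IsOpen (⋃ i ∈ Finset.range (j+2), f^[i] '' (closure D \ interior N))ᶜ := by
        rw [isOpen_compl_iff]
        have := Set.Finite.isClosed_biUnion (Finset.range (j+2)).finite_toSet
          (fun i _ => (hBc.image (hf.iterate i)).isClosed)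
        simpa using this
      have hwW : w ∈ (⋃ i ∈ Finset.range (j+2), f^[i] '' (closure D \ interior N))ᶜ := by
        intro h
        simp only [mem_iUnion] at h
        obtain ⟨i, -, z, hz, e⟩ := h
        have := hL1' i z hz.1 e
        subst this; exact hz.2 hwi
      obtain ⟨s, hsW, hsD⟩ := mem_closure_iff.1 hw _ hWo hwW
      obtain ⟨n, z, hz, rfl⟩ := hDfin b1b b1p hsD
      have hzK : z ∈ closure D := hsubK (hID z (T.subl b1w hz) (fun h => hwb1 (h ▸ hz)))
      classical
      have hz0 : f^[0] z ∉ interior N := fun h => hNb1 _ (interior_subset h) hz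
      have hτ := Nat.findGreatest_spec (P := fun k => f^[k] z ∉ interior N) (Nat.zero_le n) hz0
      have hτg := fun k => @Nat.findGreatest_is_greatest k (fun k => f^[k] z ∉ interior N) _ n
      have hτn := Nat.findGreatest_le (P := fun k => f^[k] z ∉ interior N) n
      generalize Nat.findGreatest (fun k => f^[k] z ∉ interior N) n = τ at *
      have hj : j + 2 ≤ n - τ := by
        by_contra hlt
        apply hsW
        simp only [mem_iUnion]
        refine ⟨n - τ, Finset.mem_range.2 (by omega), f^[τ] z, ⟨hKK τ z hzK, hτ⟩, ?_⟩
        rw [← Function.iterate_add_apply, Nat.sub_add_cancel hτn]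
      refine ⟨f^[τ+1] z, ⟨f^[τ] z, ⟨hKK τ z hzK, hτ⟩, (Function.iterate_succ_apply' f τ z).symm⟩, ?_⟩
      intro i hi
      rw [← Function.iterate_add_apply]
      exact interior_subset (not_not.1 (hτg (i + (τ+1)) (by omega) (by omega)))
    · have : IsClosed {x ∈ f '' (closure D \ interior N) | ∀ i ≤ 0, f^[i] x ∈ N} := by
        have e : {x ∈ f '' (closure D \ interior N) | ∀ i ≤ 0, f^[i] x ∈ N} =
          (f '' (closure D \ interior N)) ∩ ⋂ i, ⋂ (_ : i ≤ 0), f^[i] ⁻¹' N := by ext; simp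
        rw [e]
        exact (hBc.image hf).isClosed.inter
          (isClosed_iInter fun i => isClosed_iInter fun _ => hNc.preimage (hf.iterate i))
      exact this.isCompact
    · intro j
      have e : {x ∈ f '' (closure D \ interior N) | ∀ i ≤ j, f^[i] x ∈ N} =
          (f '' (closure D \ interior N)) ∩ ⋂ i, ⋂ (_ : i ≤ j), f^[i] ⁻¹' N := by ext; simp
      rw [e]
      exact (hBc.image hf).isClosed.inter
          (isClosed_iInter fun i => isClosed_iInter fun _ => hNc.preimage (hf.iterate i))
  obtain ⟨N2, hN2, hN2N, hN2f, hN2g⟩ : ∃ N2 ∈ 𝓝 w, N2 ⊆ N ∧ (∀ x ∈ N2, f x ∈ N) ∧ gs ∉ N2 :=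
    ⟨N ∩ f ⁻¹' N ∩ {gs}ᶜ, inter_mem (inter_mem hN (hf.continuousAt.preimage_mem_nhds
      (by rwa [g'.fix]))) (isOpen_compl_singleton.mem_nhds hgsw.symm),
      fun x hx => hx.1.1, fun x hx => hx.1.2, fun h => h.2 rfl⟩
  obtain ⟨v, hv, hvw, hvp, hvN⟩ := T.small hpw hN2
  have hvI : ∀ x ∈ hull p w, x ∉ N2 → x ∈ hull p v := by
    intro x hx hxN
    rw [hull_comm] at hx
    have := (T.union w p v hx).resolve_left (fun h => hxN (hvN h))
    rwa [hull_comm] at this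
  have hvw' : v ∈ hull p w := by rwa [hull_comm] at hv
  have hwv : w ∉ hull p v := fun h => hvw (T.antisymm hvw' h)
  have hb1v : b1 ∈ hull p v := hvI b1 b1w fun h => hNb1 _ (hN2N h) (right_mem_hull _ _)
  have hKA : ∀ x ∈ closure D, x ∈ N → x ∉ N2 → x ∈ hull b1 v := by
    intro x hx hxN hxN2
    exact (T.union p v b1 (hvI x (hNK x hxN hx) hxN2)).resolve_left (hNb1 x hxN)
  have hvD : v ∈ D := hID v hvw' hvw
  obtain ⟨J, hJ⟩ := hDJ hvD
  apply hHS
  refine FL T hf (p := p) (b := b) (b' := b1) g.fix g.cov (A := hull b1 v) (T.closed _ _) (T.conn _ _)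
    ⟨b1, left_mem_hull _ _⟩ (T.notmem hb1v b1p) (J := J)
    ((T.sub hb1v (right_mem_hull _ _)).trans (T.cov hf g.fix hJ)) b1b b1p ?_
  intro U hU
  obtain ⟨a', ha', ha'w, -, ha'N⟩ := T.small b2w hN2
  have hpN : p ∉ N := fun h => hNb1 p h (left_mem_hull _ _)
  obtain ⟨y, hyU, hyD⟩ := mem_closure_iff_nhds.1 hp _ (inter_mem hU (hNc.isOpen_compl.mem_nhds hpN))
  obtain ⟨q0, e0, he0, rfl⟩ := g'.sub T hf (T.subl b2b ha') ha'w hyD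
  have he0w : e0 ≠ w := by
    rintro rfl
    rw [fix_iter g'.fix] at hyU
    exact hyU.2 (interior_subset hwi)
  have he0K : e0 ∈ closure D := by
    refine hsubK (hID e0 ?_ he0w)
    rw [hull_comm]
    exact T.subl (T.subl b2p ha') he0
  classical
  have hex : ∃ n, f^[n] e0 ∉ N2 := ⟨q0, fun h => hyU.2 (hN2N h)⟩
  have hle : Nat.find hex ≤ q0 := Nat.find_min' hex fun h => hyU.2 (hN2N h)
  have hspec := Nat.find_spec hex
  have hmin := fun m => @Nat.find_min _ _ hex m
  generalize Nat.find hex = τ at hmin hspec hle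
  have hτ : τ ≠ 0 := by
    rintro rfl; exact hspec (ha'N he0)
  obtain ⟨τ', rfl⟩ := Nat.exists_eq_succ_of_ne_zero hτ
  have h1 := not_not.1 (hmin τ' (Nat.lt_succ_self _))
  refine ⟨q0 - τ'.succ, ⟨f^[τ'.succ] e0, hKA _ (hKK _ _ he0K) ?_ hspec, ?_⟩,
    ⟨gs, hKA _ hgsK (hgsN 0) hN2g, hNKb _ (hgsN _) (hKK _ _ hgsK)⟩⟩
  · rw [Function.iterate_succ_apply']; exact hN2f _ h1
  · rw [← Function.iterate_add_apply, Nat.sub_add_cancel hle]; exact hyU.1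
end dyn

open Set Filter Topology Function
open scoped ENNReal

section dyn
variable {X : Type*} [MetricSpace X] {f : X → X}

lemma iter_comm {X : Type*} (f : X → X) (a b : ℕ) (x : X) :
    f^[a] (f^[b] x) = f^[b] (f^[a] x) := by
  rw [← Function.iterate_add_apply, ← Function.iterate_add_apply, add_comm]

lemma main' [CompactSpace X] (T : TreeLike X) (hf : Continuous f) (hHS : ¬ HS f) {p w : X}
    (hp : f p = p) (hwp : w ≠ p)
    (reach : ∀ U ∈ 𝓝 p, ∀ W ∈ 𝓝 w, ∀ N, 1 ≤ N → ∃ k, ∃ u ∈ U, f^[N*k] u ∈ W)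
    (recu : ∀ A ∈ 𝓝 w, ∀ U ∈ 𝓝 p, ∀ N, 1 ≤ N → ∃ k, (∃ a ∈ A, f^[N*k] a ∈ A) ∧
      ∃ a ∈ A, f^[N*k] a ∈ U) : False := by
  obtain ⟨i0, b, hi0, g, ⟨m, hm⟩, hesc⟩ := lemSL T hf hHS hp hwp (fun U hU W hW => by
    obtain ⟨k, h⟩ := reach U hU W hW 1 le_rfl
    exact ⟨_, h⟩)
  have hg := hf.iterate i0
  obtain ⟨F, hF, hF1, hF2⟩ := T.fin _ (g.conn T hg)
  have hpre : ∀ M, ∀ U ∈ 𝓝 p, f^[M] ⁻¹' U ∈ 𝓝 p := fun M U hU =>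
    (hf.iterate M).continuousAt.preimage_mem_nhds (by rwa [fix_iter hp])
  have hpre2 : ∀ M, ∀ W ∈ 𝓝 (f^[M] w), f^[M] ⁻¹' W ∈ 𝓝 w := fun M W hW =>
    (hf.iterate M).continuousAt.preimage_mem_nhds hW
  by_cases hall : ∀ j, f^[i0 * j + m] w ∈ F
  · -- eventually periodic
    have := hF.to_subtype
    obtain ⟨j, j', hne, hjj⟩ := Finite.exists_ne_map_eq_of_infinite
      (fun j : ℕ => (⟨f^[i0 * j + m] w, hall j⟩ : F))
    simp only [Subtype.mk.injEq] at hjj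
    obtain ⟨n0, P, hP, hper⟩ : ∃ n0 P, 1 ≤ P ∧ f^[P] (f^[n0] w) = f^[n0] w := by
      have aux : ∀ j j', j < j' → f^[i0 * j + m] w = f^[i0 * j' + m] w →
          ∃ n0 P, 1 ≤ P ∧ f^[P] (f^[n0] w) = f^[n0] w := by
        intro j j' hlt he
        obtain ⟨d, rfl⟩ := Nat.exists_eq_add_of_lt hlt
        refine ⟨i0 * j + m, i0 * (d+1), Nat.mul_pos hi0 (by omega), ?_⟩
        rw [← Function.iterate_add_apply, he,
          show i0 * (d+1) + (i0 * j + m) = i0 * (j + d + 1) + m by ring]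
      rcases lt_or_gt_of_ne hne with h | h
      · exact aux _ _ h hjj
      · exact aux _ _ h hjj.symm
    have hw'p : f^[n0] w ≠ p := hesc n0
    have hFc := hf.iterate P
    have hHSF : ¬ HS f^[P] := fun h => hHS h.of_iterate
    obtain ⟨i1, b1, hi1, g1, ⟨m1, hm1⟩, -⟩ := lemSL T hFc hHSF (fix_iter hp P) hw'p (by
      intro U hU W hW
      obtain ⟨k, u, hu, h⟩ := reach _ (hpre n0 U hU) _ (hpre2 n0 W hW) P hP
      refine ⟨k, f^[n0] u, hu, ?_⟩
      rw [← Function.iterate_mul, iter_comm]; exact h)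
    obtain ⟨i2, b2, hi2, g2, ⟨m2, hm2⟩, -⟩ := lemSL T hFc hHSF hper hw'p.symm (by
      intro W hW U hU
      obtain ⟨k, -, u, hu, h⟩ := recu _ (hpre2 n0 W hW) _ (hpre n0 U hU) P hP
      refine ⟨k, f^[n0] u, hu, ?_⟩
      rw [← Function.iterate_mul, iter_comm]; exact h)
    rw [fix_iter hper] at hm1
    rw [fix_iter (fix_iter hp P)] at hm2
    obtain ⟨k1, e1⟩ := g1.pow T (hFc.iterate i1) hi2
    obtain ⟨k2, e2⟩ := g2.pow T (hFc.iterate i2) hi1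
    rw [← e1] at hm1
    rw [← e2] at hm2
    rw [← Function.iterate_mul, mul_comm] at k2 hm2
    rw [← Function.iterate_mul] at k1 hm1
    exact caseA T (hFc.iterate (i1 * i2)) (fun h => hHSF h.of_iterate) hw'p.symm k1 k2 hm1 hm2
  · push Not at hall
    obtain ⟨j, hj⟩ := hall
    have hK : f^[i0 * j + m] w ∈ closure (DD f^[i0] p b) := by
      rw [Function.iterate_add_apply, Function.iterate_mul]
      have := image_closure_subset_closure_image (hg.iterate j) (mem_image_of_mem _ hm)
      exact closure_mono (TGerm.image_sub p b j) this
    have hD := hF1 ⟨hF2 ⟨hK, hj⟩, hj⟩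
    have hw3p := hesc (i0 * j + m)
    have hpre3 := hpre2 (i0 * j + m)
    generalize hM : i0 * j + m = M at *
    generalize hw3 : f^[M] w = w3 at *
    have hnb : interior (DD f^[i0] p b) ∩ {p}ᶜ ∈ 𝓝 w3 :=
      (isOpen_interior.inter isOpen_compl_singleton).mem_nhds ⟨hD, hw3p⟩
    obtain ⟨S, hS, hSU, hSn⟩ := T.nbhd hnb
    have hAc : IsPreconnected (⋃ s ∈ S, hull w3 s) := T.star_conn w3 S id hSn
    have hAcl : IsClosed (⋃ s ∈ S, hull w3 s) := by
      have := Set.Finite.isClosed_biUnion S.finite_toSet (fun i _ => T.closed w3 i)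
      simpa using this
    obtain ⟨J, hJ⟩ : ∃ J, (⋃ s ∈ S, hull w3 s) ⊆ (f^[i0])^[J] '' hull p b := by
      have hD' : ∀ s ∈ insert w3 (⋃ s ∈ S, hull w3 s), ∃ J, s ∈ (f^[i0])^[J] '' hull p b := by
        rintro s (rfl | hs)
        · exact mem_iUnion.1 (interior_subset hD)
        · exact mem_iUnion.1 (interior_subset (hSU hs).1)
      have hD2 : ∀ s, ∃ J, s ∈ insert w3 (⋃ s ∈ S, hull w3 s) → s ∈ (f^[i0])^[J] '' hull p b := by
        intro s
        by_cases hs : s ∈ insert w3 (⋃ s ∈ S, hull w3 s)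
        · obtain ⟨J, hJ⟩ := hD' s hs; exact ⟨J, fun _ => hJ⟩
        · exact ⟨0, fun h => absurd h hs⟩
      choose J hJ using hD2
      refine ⟨max (J w3) (S.sup J), ?_⟩
      refine iUnion₂_subset fun s hs => ?_
      refine hull_subset ((T.conn p b).image _ (hg.iterate _).continuousOn) ?_ ?_
      · exact g.mono T hg (le_max_left _ _) (hJ w3 (Or.inl rfl))
      · refine g.mono T hg ((Finset.le_sup hs).trans (le_max_right _ _)) (hJ s (Or.inr ?_))
        exact mem_biUnion (show s ∈ (S : Set X) from hs) (right_mem_hull _ _)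
    have hpA : p ∉ ⋃ s ∈ S, hull w3 s := fun h => (hSU h).2 rfl
    generalize (⋃ s ∈ S, hull w3 s) = A at *
    have hwA : w3 ∈ A := mem_of_mem_nhds hS
    obtain ⟨c, c1, c2, c3⟩ := T.median p b w3
    have hcp : c ≠ p := by
      rintro rfl
      have := hull_subset (g.conn_diff T hg) ⟨TGerm.hull_sub _ _ (right_mem_hull _ _), g.ne⟩
        ⟨interior_subset hD, hw3p⟩ c3
      exact this.2 rfl
    obtain ⟨b', d1, d2, -, d3⟩ := T.small hcp (hAcl.isOpen_compl.mem_nhds hpA)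
    have hb' : ∀ v ∈ A, b' ∈ hull p v := by
      intro v hv
      refine (T.union p w3 v (T.subl c2 d1)).resolve_right fun h => ?_
      exact d3 (right_mem_hull _ _) (hull_subset hAc hv hwA h)
    apply hHS
    apply HS.of_iterate (k := i0)
    refine FL T hg g.fix g.cov hAcl hAc ⟨w3, hwA⟩ hpA hJ (T.subl c1 d1) d2 ?_
    intro U hU
    obtain ⟨k, ⟨a, ha, ha2⟩, a', ha', ha2'⟩ := recu _ (hpre3 A hS) _ (hpre M U hU) i0 hi0
    refine ⟨k, ⟨f^[M] a', ha', ?_⟩, ⟨f^[M] a, ha, hb' _ ?_⟩⟩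
    · rw [← Function.iterate_mul, iter_comm]; exact ha2'
    · rw [← Function.iterate_mul, iter_comm]; exact ha2
end dyn

open Set Filter Topology Function
open scoped ENNReal

section fin
variable {X : Type*} [MetricSpace X] {f : X → X}

lemma indep_times {x y : X}
    (hIN : ∀ U ∈ 𝓝 x, ∀ V ∈ 𝓝 y, ∀ m : ℕ, ∃ I : Finset ℕ, m ≤ I.card ∧
      ∀ J ⊆ I, J.Nonempty → ∀ s : ℕ → Bool,
      (⋂ j ∈ J, f^[j] ⁻¹' (if s j then U else V)).Nonempty)
    {U V : Set X} (hU : U ∈ 𝓝 x) (hV : V ∈ 𝓝 y) (N K : ℕ) (hN : 1 ≤ N) :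
    ∃ k, K ≤ k ∧ (∃ u ∈ U, f^[N*k] u ∈ U) ∧ (∃ u ∈ U, f^[N*k] u ∈ V) ∧
      (∃ u ∈ V, f^[N*k] u ∈ U) ∧ (∃ u ∈ V, f^[N*k] u ∈ V) := by
  obtain ⟨I, hI, hind⟩ := hIN U hU V hV (N * (K+1) + 1)
  have hpos : 0 < N * (K+1) := Nat.mul_pos hN (by omega)
  have hpig : ∃ i ∈ I, ∃ j ∈ I, i ≠ j ∧ i % (N*(K+1)) = j % (N*(K+1)) :=
    Finset.exists_ne_map_eq_of_card_lt_of_maps_to (t := Finset.range (N*(K+1)))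
      (by rw [Finset.card_range]; omega)
      (fun a _ => by simpa using Nat.mod_lt a hpos)
  have hpig : ∃ i ∈ I, ∃ j ∈ I, i < j ∧ i % (N*(K+1)) = j % (N*(K+1)) := by
    obtain ⟨i, hi, j, hj, hne, he⟩ := hpig
    rcases lt_or_gt_of_ne hne with h | h
    · exact ⟨i, hi, j, hj, h, he⟩
    · exact ⟨j, hj, i, hi, h, he.symm⟩
  obtain ⟨i, hi, j, hj, hlt, he⟩ := hpig
  obtain ⟨c, hc⟩ : N * (K+1) ∣ j - i := (Nat.modEq_iff_dvd' hlt.le).1 he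
  have hc0 : c ≠ 0 := by rintro rfl; simp at hc; omega
  have key : ∀ s t : Bool, ∃ u ∈ (if s then U else V), f^[N*((K+1)*c)] u ∈ (if t then U else V) := by
    intro s t
    obtain ⟨z, hz⟩ := hind {i, j} (by intro a; simp; rintro (rfl | rfl) <;> assumption) ⟨i, by simp⟩
      (fun n => if n = i then s else t)
    simp only [Finset.mem_insert, Finset.mem_singleton, mem_iInter, mem_preimage] at hz
    have h1 := hz i (Or.inl rfl)
    have h2 := hz j (Or.inr rfl)
    rw [if_pos rfl] at h1
    rw [if_neg hlt.ne'] at h2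
    refine ⟨f^[i] z, h1, ?_⟩
    rw [← mul_assoc, ← hc, ← Function.iterate_add_apply, Nat.sub_add_cancel hlt.le]
    exact h2
  refine ⟨(K+1)*c, ?_, key true true, key true false, key false true, key false false⟩
  have : K + 1 ≤ (K+1)*c := Nat.le_mul_of_pos_right _ (Nat.pos_of_ne_zero hc0)
  omega

lemma omega_fin [CompactSpace X] (hf : Continuous f) {x : X} (h : (omegaLimitSet f x).Finite) :
    ∃ N p, 1 ≤ N ∧ f^[N] p = p ∧ Tendsto (fun n => f^[N*n] x) atTop (𝓝 p) := by
  have hnb : ∀ U : Set X, (∀ q ∈ omegaLimitSet f x, U ∈ 𝓝 q) → ∃ n, ∀ k, n ≤ k → f^[k] x ∈ U := by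
    intro U hU
    obtain ⟨n, hn⟩ := exists_subset_nhds_of_compactSpace
      (V := fun n : ℕ => closure ((fun k => f^[k] x) '' Set.Ici n)) (by
        apply Antitone.directed_ge
        intro a b hab
        exact closure_mono (image_mono (Ici_subset_Ici.2 hab))) (fun _ => isClosed_closure) hU
    exact ⟨n, fun k hk => hn (subset_closure ⟨k, hk, rfl⟩)⟩
  have hnear : ∀ δ > 0, ∃ n, ∀ k, n ≤ k → ∃ q ∈ omegaLimitSet f x, dist (f^[k] x) q < δ := by
    intro δ hδ
    obtain ⟨n, hn⟩ := hnb (⋃ q ∈ omegaLimitSet f x, Metric.ball q δ) (fun q hq =>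
      mem_of_superset (Metric.ball_mem_nhds q hδ) (subset_biUnion_of_mem (u := fun q => Metric.ball q δ) hq))
    refine ⟨n, fun k hk => ?_⟩
    have := hn k hk
    simp only [mem_iUnion, Metric.mem_ball] at this
    obtain ⟨q, hq, h⟩ := this
    exact ⟨q, hq, h⟩
  have hinv : MapsTo f (omegaLimitSet f x) (omegaLimitSet f x) := by
    intro q hq
    simp only [omegaLimitSet, mem_iInter] at hq ⊢
    intro n
    have := image_closure_subset_closure_image hf (mem_image_of_mem f (hq n))
    refine closure_mono ?_ this
    rintro _ ⟨_, ⟨k, hk, rfl⟩, rfl⟩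
    exact ⟨k+1, Nat.le_succ_of_le hk, Function.iterate_succ_apply' f k x⟩
  have hrec : ∀ p ∈ omegaLimitSet f x, ∀ δ > 0, ∀ n, ∃ k, n ≤ k ∧ dist (f^[k] x) p < δ := by
    intro p hp δ hδ n
    simp only [omegaLimitSet, mem_iInter] at hp
    obtain ⟨_, ⟨k, hk, rfl⟩, hd⟩ := Metric.mem_closure_iff.1 (hp n) δ hδ
    exact ⟨k, hk, by rwa [dist_comm]⟩
  obtain ⟨q0, hq0⟩ : (omegaLimitSet f x).Nonempty := by
    obtain ⟨n, hn⟩ := hnear 1 one_pos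
    obtain ⟨q, hq, -⟩ := hn n le_rfl
    exact ⟨q, hq⟩
  generalize omegaLimitSet f x = Ω at *
  obtain ⟨p, hp, N, hN, hper⟩ : ∃ p ∈ Ω, ∃ N, 1 ≤ N ∧ f^[N] p = p := by
    have := h.to_subtype
    obtain ⟨i, j, hne, he⟩ := Finite.exists_ne_map_eq_of_infinite
      (fun j : ℕ => (⟨f^[j] q0, hinv.iterate j hq0⟩ : Ω))
    simp only [Subtype.mk.injEq] at he
    have aux : ∀ i j, i < j → f^[i] q0 = f^[j] q0 → ∃ p ∈ Ω, ∃ N, 1 ≤ N ∧ f^[N] p = p := by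
      intro i j hlt he
      refine ⟨f^[i] q0, hinv.iterate i hq0, j - i, by omega, ?_⟩
      rw [← Function.iterate_add_apply, Nat.sub_add_cancel hlt.le, he]
    rcases lt_or_gt_of_ne hne with h | h
    · exact aux _ _ h he
    · exact aux _ _ h he.symm
  obtain ⟨ε, hε, hsep⟩ : ∃ ε > 0, ∀ q ∈ Ω, dist p q < ε → q = p := by
    have : (Ω \ {p})ᶜ ∈ 𝓝 p := (h.subset sdiff_subset).isClosed.isOpen_compl.mem_nhds (fun h => h.2 rfl)
    obtain ⟨ε, hε, hb⟩ := Metric.mem_nhds_iff.1 this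
    refine ⟨ε, hε, fun q hq hd => ?_⟩
    by_contra hne
    exact hb (by rwa [Metric.mem_ball, dist_comm]) ⟨hq, hne⟩
  obtain ⟨δ, hδ, hδε, hcont⟩ : ∃ δ > 0, δ ≤ ε/2 ∧ ∀ z, dist z p < δ → dist (f^[N] z) p < ε/2 := by
    obtain ⟨δ, hδ, hc⟩ := Metric.continuousAt_iff.1 ((hf.iterate N).continuousAt (x := p)) (ε/2)
      (half_pos hε)
    refine ⟨min δ (ε/2), lt_min hδ (half_pos hε), min_le_right _ _, fun z hz => ?_⟩
    have := hc (hz.trans_le (min_le_left _ _))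
    rwa [hper] at this
  obtain ⟨n0, hn0⟩ := hnear δ hδ
  obtain ⟨n1, hn1, hn1d⟩ := hrec p hp δ hδ n0
  have hall : ∀ j, dist (f^[N*j] (f^[n1] x)) p < δ := by
    intro j
    induction j with
    | zero => simpa using hn1d
    | succ j ih =>
      have h1 := hcont _ ih
      rw [← Function.iterate_add_apply, show N + N * j = N * (j+1) by ring] at h1
      obtain ⟨q, hq, hd⟩ := hn0 (N*(j+1) + n1) (by omega)
      rw [Function.iterate_add_apply] at hd
      have : q = p := by
        apply hsep q hq
        rw [dist_comm] at h1
        have := dist_triangle p (f^[N*(j+1)] (f^[n1] x)) q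
        linarith
      rwa [this] at hd
  have hlim : Tendsto (fun j => f^[N*j] (f^[n1] x)) atTop (𝓝 p) := by
    rw [Metric.tendsto_atTop]
    intro δ' hδ'
    obtain ⟨n2, hn2⟩ := hnear (min δ' δ) (lt_min hδ' hδ)
    refine ⟨n2, fun j hj => ?_⟩
    have : j ≤ N * j := Nat.le_mul_of_pos_left _ hN
    obtain ⟨q, hq, hd⟩ := hn2 (N*j + n1) (by omega)
    rw [Function.iterate_add_apply] at hd
    have hqp : q = p := by
      apply hsep q hq
      have h1 := hall j
      rw [dist_comm] at h1
      have := dist_triangle p (f^[N*j] (f^[n1] x)) q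
      have := hd.trans_le (min_le_right _ _)
      linarith
    rw [hqp] at hd
    exact hd.trans_le (min_le_left _ _)
  refine ⟨N, f^[N*n1 - n1] p, hN, by rw [iter_comm, hper], ?_⟩
  have hle : n1 ≤ N * n1 := Nat.le_mul_of_pos_left _ hN
  have h2 := ((hf.iterate (N*n1 - n1)).tendsto p).comp hlim
  rw [← tendsto_add_atTop_iff_nat n1]
  refine h2.congr fun j => ?_
  simp only [Function.comp]
  rw [← Function.iterate_add_apply, ← Function.iterate_add_apply]
  congr 1
  rw [mul_add]; omega

lemma final_x [CompactSpace X] (T : TreeLike X) (hf : Continuous f) (hHS : ¬ HS f) {x y : X}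
    (hne : x ≠ y)
    (hIN : ∀ U ∈ 𝓝 x, ∀ V ∈ 𝓝 y, ∀ m : ℕ, ∃ I : Finset ℕ, m ≤ I.card ∧
      ∀ J ⊆ I, J.Nonempty → ∀ s : ℕ → Bool,
      (⋂ j ∈ J, f^[j] ⁻¹' (if s j then U else V)).Nonempty) :
    (omegaLimitSet f x).Infinite := by
  intro hfin
  obtain ⟨N0, p, hN0, hp, hlim⟩ := omega_fin hf hfin
  have hHS' : ¬ HS f^[N0] := fun h => hHS h.of_iterate
  have hF := hf.iterate N0
  by_cases hxp : x = p
  · subst hxp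
    refine main' T hF hHS' hp hne.symm ?_ ?_
    · intro U hU W hW N hN
      obtain ⟨k, -, -, ⟨u, hu, h⟩, -⟩ := indep_times hIN hU hW (N0*N) 0 (Nat.mul_pos hN0 hN)
      refine ⟨k, u, hu, ?_⟩
      rwa [← Function.iterate_mul, ← mul_assoc]
    · intro A hA U hU N hN
      obtain ⟨k, -, -, -, h1, h2⟩ := indep_times hIN hU hA (N0*N) 0 (Nat.mul_pos hN0 hN)
      refine ⟨k, ?_, ?_⟩
      · rwa [← Function.iterate_mul, ← mul_assoc]
      · rwa [← Function.iterate_mul, ← mul_assoc]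
  · refine main' T hF hHS' hp hxp ?_ ?_
    · intro U hU W hW N hN
      have hUi : ∀ᶠ n in atTop, f^[N0*n] x ∈ interior U := hlim.eventually (interior_mem_nhds.2 hU)
      obtain ⟨n, hn⟩ := hUi.exists_forall_of_atTop
      have hle : n ≤ N * n := Nat.le_mul_of_pos_left _ hN
      have hU' : f^[N0 * (N*n)] ⁻¹' U ∈ 𝓝 x :=
        (hf.iterate _).continuousAt.preimage_mem_nhds
          (mem_interior_iff_mem_nhds.1 (hn (N*n) hle))
      obtain ⟨k, hk, ⟨u, hu, h⟩, -⟩ := indep_times hIN (inter_mem hU' hW) univ_mem (N0*N) n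
        (Nat.mul_pos hN0 hN)
      refine ⟨k - n, f^[N0 * (N*n)] u, hu.1, ?_⟩
      rw [← Function.iterate_mul, ← Function.iterate_add_apply]
      have : N0 * (N * (k - n)) + N0 * (N * n) = N0 * N * k := by
        rw [← mul_add, ← mul_add, Nat.sub_add_cancel hk, mul_assoc]
      rw [this]
      exact h.2
    · intro A hA U hU N hN
      obtain ⟨n, hn⟩ := (hlim.eventually hU).exists_forall_of_atTop
      obtain ⟨k, hk, h1, -⟩ := indep_times hIN hA univ_mem (N0*N) n (Nat.mul_pos hN0 hN)
      refine ⟨k, ?_, x, mem_of_mem_nhds hA, ?_⟩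
      · rwa [← Function.iterate_mul, ← mul_assoc]
      · rw [← Function.iterate_mul]
        exact hn _ (hk.trans (Nat.le_mul_of_pos_left _ hN))
end fin

open Set Filter Topology Function
open scoped ENNReal

lemma hs_points {X : Type*} {g : X → X} (S : Bool → Set X) (hne : (S true).Nonempty)
    (h : ∀ s t, S s ⊆ g '' S t) (N : ℕ) : ∀ ω : ℕ → Bool, ∃ x, ∀ j ≤ N, g^[j] x ∈ S (ω j) := by
  induction N with
  | zero =>
    intro ω
    obtain ⟨y, hy⟩ := hne
    obtain ⟨x, hx, -⟩ := h true (ω 0) hy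
    refine ⟨x, fun j hj => ?_⟩
    obtain rfl : j = 0 := by omega
    exact hx
  | succ N ih =>
    intro ω
    obtain ⟨y, hy⟩ := ih (fun n => ω (n+1))
    obtain ⟨x, hx, hxy⟩ := h (ω 1) (ω 0) (hy 0 (Nat.zero_le _))
    refine ⟨x, fun j hj => ?_⟩
    rcases j with _ | j
    · exact hx
    · rw [Function.iterate_succ_apply, hxy]
      exact hy j (by omega)

lemma cover_count_nonempty {X : Type*} {f : X → X} {a : ℕ → ℕ} (𝒰 : Finset (Set X))
    (h : ⋃₀ (𝒰 : Set (Set X)) = univ) (n : ℕ) :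
    { m | ∃ c : Fin m → Fin n → Set X, (∀ j i, c j i ∈ 𝒰) ∧
      (univ : Set X) ⊆ ⋃ j, ⋂ i, f^[a i.1] ⁻¹' c j i }.Nonempty := by
  classical
  refine ⟨Fintype.card (Fin n → 𝒰), fun j i => ((Fintype.equivFin (Fin n → 𝒰)).symm j i).1,
    fun j i => Subtype.prop _, fun x _ => ?_⟩
  have hx : ∀ i : Fin n, ∃ U : 𝒰, f^[a i.1] x ∈ U.1 := by
    intro i
    obtain ⟨U, hU, hxU⟩ := (h.symm ▸ mem_univ _ : f^[a i.1] x ∈ ⋃₀ (𝒰 : Set (Set X)))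
    exact ⟨⟨U, hU⟩, hxU⟩
  choose U hU using hx
  refine mem_iUnion.2 ⟨Fintype.equivFin (Fin n → 𝒰) U, mem_iInter.2 fun i => ?_⟩
  simp only [mem_preimage, Equiv.symm_apply_apply]
  exact hU i

lemma not_HS {X : Type*} [TopologicalSpace X] {f : X → X} (h0 : topEntropy f = 0) : ¬ HS f := by
  classical
  rintro ⟨S1, S2, n, c1, c2, hd, hne, h1, h2⟩
  have hn : 1 ≤ n := by
    rcases Nat.eq_zero_or_pos n with rfl | h
    · exfalso
      obtain ⟨x, hx⟩ := hne
      obtain ⟨y, hy, e⟩ := h2 (Or.inl hx)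
      simp at e; subst e
      exact disjoint_left.1 hd hx hy
    · exact h
  let S : Bool → Set X := fun b => if b then S1 else S2
  have hS : ∀ s t, S s ⊆ f^[n] '' S t := by
    intro s t
    cases s <;> cases t <;> simp only [S] <;> simp
    · exact subset_union_right.trans h2
    · exact subset_union_right.trans h1
    · exact subset_union_left.trans h2
    · exact subset_union_left.trans h1
  have hdis : ∀ s t, s ≠ t → Disjoint (S s) (S t) := by
    intro s t hst
    cases s <;> cases t <;> simp [S] at hst ⊢
    · exact hd.symm
    · exact hd
  let 𝒰 : Finset (Set X) := {S1ᶜ, S2ᶜ}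
  have hcov : ⋃₀ (𝒰 : Set (Set X)) = univ := by
    ext x
    simp only [𝒰, Finset.coe_insert, Finset.coe_singleton, sUnion_insert, sUnion_singleton, mem_union,
      mem_compl_iff, mem_univ, iff_true]
    by_contra h
    push Not at h
    exact disjoint_left.1 hd h.1 h.2
  have hUo : IsOpenCoverOn univ 𝒰 := by
    refine ⟨?_, hcov.ge⟩
    intro U hU
    simp only [𝒰, Finset.mem_insert, Finset.mem_singleton] at hU
    rcases hU with rfl | rfl
    · exact c1.isOpen_compl
    · exact c2.isOpen_compl
  have hU2 : ∀ U ∈ 𝒰, ∃ b, U = (S b)ᶜ := by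
    intro U hU
    simp only [𝒰, Finset.mem_insert, Finset.mem_singleton] at hU
    rcases hU with rfl | rfl
    · exact ⟨true, rfl⟩
    · exact ⟨false, rfl⟩
  have hcount : ∀ N, 2 ^ N ≤ seqCoverCountOn f univ id 𝒰 (n * N) := by
    intro N
    obtain ⟨c, hc, hcc⟩ := Nat.sInf_mem (cover_count_nonempty (f := f) (a := id) 𝒰 hcov (n * N))
    change 2 ^ N ≤ sInf _
    generalize sInf { m | ∃ c : Fin m → Fin (n*N) → Set X, (∀ j i, c j i ∈ 𝒰) ∧
      (univ : Set X) ⊆ ⋃ j, ⋂ i, f^[id i.1] ⁻¹' c j i } = m at c hc hcc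
    have hpt : ∀ ω : Fin N → Bool, ∃ x, ∀ j : Fin N, f^[n * j.1] x ∈ S (ω j) := by
      intro ω
      obtain ⟨x, hx⟩ := hs_points S (by simpa [S] using hne) hS N
        (fun j => if h : j < N then ω ⟨j, h⟩ else true)
      refine ⟨x, fun j => ?_⟩
      have := hx j.1 j.2.le
      rw [dif_pos j.2] at this
      rwa [Function.iterate_mul]
    choose x hx using hpt
    have hj : ∀ ω, ∃ j, ∀ i, f^[id i.1] (x ω) ∈ c j i := by
      intro ω
      obtain ⟨j, hj⟩ := mem_iUnion.1 (hcc (mem_univ (x ω)))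
      exact ⟨j, fun i => mem_iInter.1 hj i⟩
    choose J hJ using hj
    have hinj : Injective J := by
      intro ω ω' he
      by_contra hne
      obtain ⟨i, hi⟩ := Function.ne_iff.1 hne
      have hlt : n * i.1 < n * N := Nat.mul_lt_mul_of_pos_left i.2 hn
      obtain ⟨b, hb⟩ := hU2 _ (hc (J ω) ⟨n * i.1, hlt⟩)
      have e1 := hJ ω ⟨n * i.1, hlt⟩
      have e2 := hJ ω' ⟨n * i.1, hlt⟩
      rw [← he, hb] at e2
      rw [hb] at e1
      have b1 : b ≠ ω i := by rintro rfl; exact e1 (hx ω i)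
      have b2 : b ≠ ω' i := by rintro rfl; exact e2 (hx ω' i)
      revert hi b1 b2
      cases b <;> cases ω i <;> cases ω' i <;> simp
    have := Fintype.card_le_of_injective J hinj
    simpa using this
  have hpos : 0 < ENNReal.ofReal (Real.log 2 / n) := by
    rw [ENNReal.ofReal_pos]
    exact div_pos (Real.log_pos one_lt_two) (by exact_mod_cast hn)
  have hle : ENNReal.ofReal (Real.log 2 / n) ≤ Filter.limsup
      (fun k : ℕ => ENNReal.ofReal (Real.log (seqCoverCountOn f univ id 𝒰 k) / k)) Filter.atTop := by
    refine Filter.le_limsup_of_frequently_le ?_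
    rw [Filter.frequently_atTop]
    intro a
    refine ⟨n * (a+1), ?_, ?_⟩
    · have : a + 1 ≤ n * (a+1) := Nat.le_mul_of_pos_left _ hn
      omega
    · apply ENNReal.ofReal_le_ofReal
      have hn' : (0:ℝ) < n := by exact_mod_cast hn
      have e : Real.log 2 / n = Real.log ((2:ℝ)^(a+1)) / ((n * (a+1) : ℕ) : ℝ) := by
        rw [Real.log_pow]; push_cast; field_simp
      rw [e]
      gcongr
      exact_mod_cast hcount (a+1)
  have hle2 : ENNReal.ofReal (Real.log 2 / n) ≤ topEntropy f :=
    hle.trans (le_iSup₂ (f := fun (𝒰 : Finset (Set X)) (_ : IsOpenCoverOn univ 𝒰) => Filter.limsup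
      (fun k : ℕ => ENNReal.ofReal (Real.log (seqCoverCountOn f univ id 𝒰 k) / k)) Filter.atTop) 𝒰 hUo)
  rw [h0] at hle2
  exact absurd hle2 (not_le.2 hpos)

open Set Filter Topology Function
open scoped ENNReal

section arcs
variable {X : Type*} [MetricSpace X]

lemma arc_param {A : Set X} (hA : IsArc A) : ∃ γ : ℝ → X, Continuous γ ∧ InjOn γ (Icc 0 1) ∧
    γ '' Icc 0 1 = A ∧ ∀ S ⊆ A, IsPreconnected S → OrdConnected (Icc 0 1 ∩ γ ⁻¹' S) := by
  obtain ⟨φ⟩ := hA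
  refine ⟨fun t => (φ.symm (projIcc 0 1 zero_le_one t)).val, ?_, ?_, ?_, ?_⟩
  · exact continuous_subtype_val.comp (φ.symm.continuous.comp continuous_projIcc)
  · intro s hs t ht h
    have := φ.symm.injective (Subtype.val_injective h)
    rw [projIcc_of_mem _ hs, projIcc_of_mem _ ht] at this
    exact congrArg Subtype.val this
  · apply Subset.antisymm
    · rintro _ ⟨t, _, rfl⟩
      exact Subtype.prop _
    · intro a ha
      refine ⟨(φ ⟨a, ha⟩).val, (φ ⟨a, ha⟩).2, ?_⟩
      simp [projIcc_of_mem]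
  · intro S hSA hS
    have h1 : IsPreconnected ((Subtype.val : A → X) ⁻¹' S) := by
      rw [← IsInducing.subtypeVal.isPreconnected_image, Subtype.image_preimage_coe,
        inter_eq_right.2 hSA]
      exact hS
    have h2 : IsPreconnected ((fun a : A => (φ a).val) '' ((Subtype.val : A → X) ⁻¹' S)) :=
      h1.image _ (continuous_subtype_val.comp φ.continuous).continuousOn
    have h3 := h2.ordConnected
    suffices e : (Icc (0:ℝ) 1 ∩ (fun t => (φ.symm (projIcc 0 1 zero_le_one t)).val) ⁻¹' S) =
        (fun a : A => (φ a).val) '' ((Subtype.val : A → X) ⁻¹' S) by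
      rw [e]; exact h3
    ext t
    constructor
    · rintro ⟨ht, h⟩
      refine ⟨_, h, ?_⟩
      simp [projIcc_of_mem _ ht]
    · rintro ⟨a, ha, rfl⟩
      refine ⟨(φ a).2, ?_⟩
      simpa [projIcc_of_mem] using ha

lemma arc_end {A : Set X} {γ : ℝ → X} (him : γ '' Icc 0 1 = A)
    (ho : ∀ S ⊆ A, IsPreconnected S → OrdConnected (Icc 0 1 ∩ γ ⁻¹' S)) {p : X}
    (hp : IsArcEndpoint A p) : p = γ 0 ∨ p = γ 1 := by
  obtain ⟨hpA, hc⟩ := hp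
  rw [← him] at hpA
  obtain ⟨t, ht, rfl⟩ := hpA
  by_contra! hcon
  have h := (ho _ Set.sdiff_subset hc.isPreconnected).out (x := 0) (y := 1)
    ⟨by simp, by rw [← him]; exact ⟨0, by simp, rfl⟩, fun h => hcon.1 h.symm⟩
    ⟨by simp, by rw [← him]; exact ⟨1, by simp, rfl⟩, fun h => hcon.2 h.symm⟩ ht
  exact h.2.2 rfl

def Jn (Y : Set X) (γ : ℝ → X) (a b : X) : Prop :=
  ContinuousOn γ (Icc 0 1) ∧ InjOn γ (Icc 0 1) ∧
    γ 0 = a ∧ γ 1 = b ∧ ∀ S ⊆ Y, IsPreconnected S → a ∈ S → b ∈ S → γ '' Icc 0 1 ⊆ S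

def PA (Y : Set X) : Prop :=
  IsPreconnected Y ∧ ∀ a ∈ Y, ∀ b ∈ Y, a ≠ b → ∃ γ, Jn Y γ a b

lemma PA_arc {A : Set X} {γ : ℝ → X} (hc : Continuous γ) (hi : InjOn γ (Icc 0 1))
    (him : γ '' Icc 0 1 = A)
    (ho : ∀ S ⊆ A, IsPreconnected S → OrdConnected (Icc 0 1 ∩ γ ⁻¹' S)) : PA A := by
  refine ⟨him ▸ isPreconnected_Icc.image _ hc.continuousOn, ?_⟩
  rw [← him]
  rintro _ ⟨s, hs, rfl⟩ _ ⟨t, ht, rfl⟩ hst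
  have hst' : s ≠ t := fun h => hst (h ▸ rfl)
  have hm : ∀ u ∈ Icc (0:ℝ) 1, s + u * (t - s) ∈ Icc (0:ℝ) 1 := by
    rintro u ⟨h0, h1⟩
    obtain ⟨a, b⟩ := hs
    obtain ⟨c, d⟩ := ht
    constructor <;> nlinarith
  refine ⟨fun u => γ (s + u * (t - s)), ?_, ?_, by simp, by simp, ?_⟩
  · exact (hc.comp (by fun_prop)).continuousOn
  · intro u hu v hv h
    have := hi (hm u hu) (hm v hv) h
    have h2 : t - s ≠ 0 := sub_ne_zero.2 hst'.symm
    have : u * (t - s) = v * (t - s) := by linarith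
    exact mul_right_cancel₀ h2 this
  · rintro S hS hSc h1 h2 _ ⟨u, hu, rfl⟩
    have h := (ho S (him ▸ hS) hSc).uIcc_subset ⟨hs, h1⟩ ⟨ht, h2⟩
    refine (h ?_).2
    obtain ⟨h0, h1⟩ := hu
    rw [mem_uIcc]
    rcases le_total s t with h | h
    · left; constructor <;> nlinarith
    · right; constructor <;> nlinarith

lemma glue_pre {Y A S : Set X} (hY : IsClosed Y) (hA : IsClosed A) {v : X} (hv : Y ∩ A = {v})
    (hS : IsPreconnected S) (hSs : S ⊆ Y ∪ A) : IsPreconnected (S ∩ Y) := by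
  rw [isPreconnected_closed_iff] at hS ⊢
  rintro t t' ht ht' hcov ⟨x, ⟨hxS, hxY⟩, hxt⟩ ⟨y, ⟨hyS, hyY⟩, hyt⟩
  by_cases hvS : v ∈ S
  · have hvY : v ∈ Y := (hv.symm ▸ rfl : v ∈ Y ∩ A).1
    have hvA : v ∈ A := (hv.symm ▸ rfl : v ∈ Y ∩ A).2
    have main : ∀ t t', IsClosed t → IsClosed t' → S ∩ Y ⊆ t ∪ t' → (∃ x ∈ S ∩ Y, x ∈ t) →
        (∃ x ∈ S ∩ Y, x ∈ t') → v ∈ t → (S ∩ Y ∩ (t ∩ t')).Nonempty := by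
      rintro t t' ht ht' hcov ⟨x, ⟨hxS, hxY⟩, hxt⟩ ⟨y, ⟨hyS, hyY⟩, hyt⟩ hvt
      obtain ⟨z, hzS, hz1, hz2⟩ := hS ((t ∩ Y) ∪ A) (t' ∩ Y) ((ht.inter hY).union hA)
        (ht'.inter hY) (by
          intro z hz
          rcases hSs hz with h | h
          · rcases hcov ⟨hz, h⟩ with h' | h'
            · exact Or.inl (Or.inl ⟨h', h⟩)
            · exact Or.inr ⟨h', h⟩
          · exact Or.inl (Or.inr h)) ⟨x, hxS, Or.inl ⟨hxt, hxY⟩⟩ ⟨y, hyS, hyt, hyY⟩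
      rcases hz1 with hz1 | hz1
      · exact ⟨z, ⟨hzS, hz2.2⟩, hz1.1, hz2.1⟩
      · have : z = v := by
          have : z ∈ Y ∩ A := ⟨hz2.2, hz1⟩
          rwa [hv] at this
        subst this
        exact ⟨z, ⟨hzS, hvY⟩, hvt, hz2.1⟩
    rcases hcov ⟨hvS, hvY⟩ with h | h
    · exact main t t' ht ht' hcov ⟨x, ⟨hxS, hxY⟩, hxt⟩ ⟨y, ⟨hyS, hyY⟩, hyt⟩ h
    · obtain ⟨z, h1, h2, h3⟩ := main t' t ht' ht (by rwa [union_comm])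
        ⟨y, ⟨hyS, hyY⟩, hyt⟩ ⟨x, ⟨hxS, hxY⟩, hxt⟩ h
      exact ⟨z, h1, h3, h2⟩
  · have hSY : S ⊆ Y := by
      intro z hz
      by_contra hzY
      have hzA := (hSs hz).resolve_left hzY
      obtain ⟨w, hw, hw1⟩ := hS Y A hY hA hSs ⟨x, hxS, hxY⟩ ⟨z, hz, hzA⟩
      rw [hv] at hw1
      exact hvS (hw1 ▸ hw)
    rw [inter_eq_left.2 hSY] at hcov ⊢
    exact hS t t' ht ht' hcov ⟨x, hxS, hxt⟩ ⟨y, hyS, hyt⟩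

noncomputable def cat (γ δ : ℝ → X) : ℝ → X := fun t => if t ≤ 1/2 then γ (2*t) else δ (2*t-1)

lemma cat_left (γ δ : ℝ → X) {t : ℝ} (h : t ≤ 1/2) : cat γ δ t = γ (2*t) := if_pos h
lemma cat_right {γ δ : ℝ → X} (hg : γ 1 = δ 0) {t : ℝ} (h : 1/2 ≤ t) :
    cat γ δ t = δ (2*t-1) := by
  unfold cat
  split_ifs with h'
  · have : t = 1/2 := le_antisymm h' h
    subst this; norm_num [hg]
  · rfl

lemma cat_cont {γ δ : ℝ → X} (hg : γ 1 = δ 0) (h1 : ContinuousOn γ (Icc 0 1))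
    (h2 : ContinuousOn δ (Icc 0 1)) : ContinuousOn (cat γ δ) (Icc 0 1) := by
  have e : Icc (0:ℝ) 1 = Icc 0 (1/2) ∪ Icc (1/2) 1 := (Icc_union_Icc_eq_Icc (by norm_num) (by norm_num)).symm
  rw [e]
  apply ContinuousOn.union_of_isClosed _ _ isClosed_Icc isClosed_Icc
  · have : ContinuousOn (fun t => γ (2*t)) (Icc 0 (1/2)) :=
      h1.comp (by fun_prop) (fun t ht => ⟨by linarith [ht.1], by linarith [ht.2]⟩)
    exact this.congr (fun t ht => cat_left _ _ ht.2)
  · have : ContinuousOn (fun t => δ (2*t-1)) (Icc (1/2) 1) :=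
      h2.comp (by fun_prop) (fun t ht => ⟨by linarith [ht.1], by linarith [ht.2]⟩)
    exact this.congr (fun t ht => cat_right hg ht.1)

lemma cat_image {γ δ : ℝ → X} (hg : γ 1 = δ 0) :
    cat γ δ '' Icc 0 1 ⊆ γ '' Icc 0 1 ∪ δ '' Icc 0 1 := by
  rintro _ ⟨t, ht, rfl⟩
  rcases le_total t (1/2) with h | h
  · rw [cat_left _ _ h]; exact Or.inl ⟨_, ⟨by linarith [ht.1], by linarith⟩, rfl⟩
  · rw [cat_right hg h]; exact Or.inr ⟨_, ⟨by linarith, by linarith [ht.2]⟩, rfl⟩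

/-- injectivity, allowing endpoints to coincide -/
lemma cat_inj {γ δ : ℝ → X} (hg : γ 1 = δ 0) (h1 : InjOn γ (Icc 0 1)) (h2 : InjOn δ (Icc 0 1))
    (hI : ∀ s ∈ Icc (0:ℝ) 1, ∀ t ∈ Ico (0:ℝ) 1, γ s = δ t → t = 0) :
    InjOn (cat γ δ) (Ico 0 1) := by
  have main : ∀ s ∈ Ico (0:ℝ) 1, ∀ t ∈ Ico (0:ℝ) 1, s ≤ t → cat γ δ s = cat γ δ t → s = t := by
    intro s hs t ht hst h
    obtain ⟨s0, s1⟩ := hs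
    obtain ⟨t0, t1⟩ := ht
    rcases le_total t (1/2) with ht | ht
    · rw [cat_left _ _ ht, cat_left _ _ (hst.trans ht)] at h
      have := h1 ⟨by linarith, by linarith⟩ ⟨by linarith, by linarith⟩ h
      linarith
    · rw [cat_right hg ht] at h
      rcases le_total s (1/2) with hs | hs
      · rw [cat_left _ _ hs] at h
        have e := hI _ ⟨by linarith, by linarith⟩ _ ⟨by linarith, by linarith⟩ h
        rw [e, ← hg] at h
        have := h1 ⟨by linarith, by linarith⟩ ⟨by linarith, by linarith⟩ h
        linarith
      · rw [cat_right hg hs] at h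
        have := h2 ⟨by linarith, by linarith⟩ ⟨by linarith, by linarith⟩ h
        linarith
  intro s hs t ht h
  rcases le_total s t with h' | h'
  · exact main s hs t ht h' h
  · exact (main t ht s hs h' h.symm).symm

lemma inj_Icc {γ : ℝ → X} (h1 : InjOn γ (Ico 0 1)) (h2 : ∀ t ∈ Ico (0:ℝ) 1, γ t ≠ γ 1) :
    InjOn γ (Icc 0 1) := by
  intro s hs t ht h
  rcases hs.2.lt_or_eq with h' | h' <;> rcases ht.2.lt_or_eq with h'' | h''
  · exact h1 ⟨hs.1, h'⟩ ⟨ht.1, h''⟩ h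
  · subst h''; exact (h2 s ⟨hs.1, h'⟩ h).elim
  · subst h'; exact (h2 t ⟨ht.1, h''⟩ h.symm).elim
  · rw [h', h'']

lemma Jn.sub {Y : Set X} {γ : ℝ → X} {a b : X} (h : Jn Y γ a b) (hY : IsPreconnected Y)
    (ha : a ∈ Y) (hb : b ∈ Y) : γ '' Icc 0 1 ⊆ Y := h.2.2.2.2 Y Subset.rfl hY ha hb

lemma glue_half {Y A : Set X} (hY : IsClosed Y) (hA : IsClosed A) {v : X} (hv : Y ∩ A = {v})
    (pY : PA Y) (pA : PA A) {a : X} (ha : a ∈ Y) {b : X} (hb : b ∈ Y ∪ A) (hab : a ≠ b) :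
    ∃ γ, Jn (Y ∪ A) γ a b := by
  have hvY : v ∈ Y := (hv.symm ▸ rfl : v ∈ Y ∩ A).1
  have hvA : v ∈ A := (hv.symm ▸ rfl : v ∈ Y ∩ A).2
  have hv' : A ∩ Y = {v} := by rw [inter_comm, hv]
  have pr := fun S (h : IsPreconnected S) hs => glue_pre (S := S) hY hA hv h hs
  have pr' := fun S (h : IsPreconnected S) hs =>
    glue_pre (S := S) hA hY hv' h (by rw [union_comm]; exact hs)
  by_cases hbY : b ∈ Y
  · obtain ⟨γ, c, i, h0, h1, h⟩ := pY.2 a ha b hbY hab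
    exact ⟨γ, c, i, h0, h1, fun S hS hSc h1 h2 =>
      (h _ inter_subset_right (pr S hSc hS) ⟨h1, ha⟩ ⟨h2, hbY⟩).trans inter_subset_left⟩
  have hbA := hb.resolve_left hbY
  have hvS : ∀ S ⊆ Y ∪ A, IsPreconnected S → a ∈ S → b ∈ S → v ∈ S := by
    intro S hS hSc h1 h2
    obtain ⟨w, hw, hw1⟩ := (isPreconnected_closed_iff.1 hSc) Y A hY hA hS ⟨a, h1, ha⟩ ⟨b, h2, hbA⟩
    rw [hv] at hw1
    exact hw1 ▸ hw
  by_cases hav : a = v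
  · subst hav
    obtain ⟨γ, c, i, h0, h1, h⟩ := pA.2 a hvA b hbA hab
    exact ⟨γ, c, i, h0, h1, fun S hS hSc h1 h2 =>
      (h _ inter_subset_right (pr' S hSc hS) ⟨h1, hvA⟩ ⟨h2, hbA⟩).trans inter_subset_left⟩
  have hvb : v ≠ b := fun h => hbY (h ▸ hvY)
  obtain ⟨γ, J1⟩ := pY.2 a ha v hvY hav
  obtain ⟨δ, J2⟩ := pA.2 v hvA b hbA hvb
  have s1 := J1.sub pY.1 ha hvY
  have s2 := J2.sub pA.1 hvA hbA
  obtain ⟨c1, i1, h10, h11, hS1⟩ := J1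
  obtain ⟨c2, i2, h20, h21, hS2⟩ := J2
  have hg : γ 1 = δ 0 := by rw [h11, h20]
  have key : ∀ s ∈ Icc (0:ℝ) 1, ∀ t ∈ Icc (0:ℝ) 1, γ s = δ t → t = 0 := by
    intro s hs t ht h
    have : δ t ∈ Y ∩ A := ⟨h ▸ s1 ⟨s, hs, rfl⟩, s2 ⟨t, ht, rfl⟩⟩
    rw [hv, mem_singleton_iff, ← h20] at this
    exact i2 ht (by simp) this
  refine ⟨cat γ δ, cat_cont hg c1 c2, inj_Icc (cat_inj hg i1 i2 ?_) ?_, ?_, ?_, ?_⟩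
  · exact fun s hs t ht h => key s hs t ⟨ht.1, ht.2.le⟩ h
  · intro t ht h
    rw [cat_right hg (t := 1) (by norm_num)] at h
    norm_num at h
    rcases le_total t (1/2) with h' | h'
    · rw [cat_left _ _ h'] at h
      have := key _ ⟨by linarith [ht.1], by linarith⟩ 1 (by simp) h
      norm_num at this
    · rw [cat_right hg h'] at h
      have := i2 ⟨by linarith, by linarith [ht.2]⟩ (by simp) h
      linarith [ht.2]
  · rw [cat_left _ _ (by norm_num)]; simpa using h10
  · rw [cat_right hg (by norm_num)]; norm_num [h21]
  · intro S hS hSc h1 h2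
    have hvs := hvS S hS hSc h1 h2
    refine (cat_image hg).trans (union_subset ?_ ?_)
    · exact (hS1 _ inter_subset_right (pr S hSc hS) ⟨h1, ha⟩ ⟨hvs, hvY⟩).trans inter_subset_left
    · exact (hS2 _ inter_subset_right (pr' S hSc hS) ⟨hvs, hvA⟩ ⟨h2, hbA⟩).trans inter_subset_left

lemma glue {Y A : Set X} (hY : IsClosed Y) (hA : IsClosed A) {v : X} (hv : Y ∩ A = {v})
    (pY : PA Y) (pA : PA A) : PA (Y ∪ A) := by
  have hvY : v ∈ Y := (hv.symm ▸ rfl : v ∈ Y ∩ A).1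
  have hvA : v ∈ A := (hv.symm ▸ rfl : v ∈ Y ∩ A).2
  refine ⟨pY.1.union v hvY hvA pA.1, fun a ha b hb hab => ?_⟩
  rcases ha with h | h
  · exact glue_half hY hA hv pY pA h hb hab
  · rw [union_comm] at hb ⊢
    exact glue_half hA hY (by rw [inter_comm, hv]) pA pY h hb hab

lemma circle_curve {δ : ℝ → X} (hc : ContinuousOn δ (Icc 0 1)) (h01 : δ 0 = δ 1)
    (hi : InjOn δ (Ico 0 1)) : ∃ S : Set X, IsSimpleClosedCurve S := by
  haveI : Fact ((0:ℝ) < 1) := ⟨one_pos⟩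
  let F : AddCircle (1:ℝ) → X := AddCircle.liftIco 1 0 δ
  have hF : Continuous F := AddCircle.liftIco_zero_continuous h01 hc
  have hinj : Injective F := by
    intro u v huv
    obtain ⟨s, hs, rfl⟩ := AddCircle.eq_coe_Ico u
    obtain ⟨t, ht, rfl⟩ := AddCircle.eq_coe_Ico v
    simp only [F] at huv
    rw [AddCircle.liftIco_zero_coe_apply hs, AddCircle.liftIco_zero_coe_apply ht] at huv
    rw [hi hs ht huv]
  let e := Equiv.ofInjective F hinj
  have he : Continuous e := hF.subtype_mk _
  have hh := he.homeoOfEquivCompactToT2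
  have hcirc : AddCircle (1:ℝ) ≃ₜ Circle := AddCircle.homeomorphCircle one_ne_zero
  have h3 : Circle ≃ₜ Metric.sphere (0:ℂ) 1 := Homeomorph.refl _
  exact ⟨range F, ⟨hh.symm.trans (hcirc.trans h3)⟩⟩

end arcs

open Set Filter Topology Function
open scoped ENNReal

section growth
variable {X : Type*} [MetricSpace X]

def Par (γ : ℝ → X) (A : Set X) : Prop :=
  Continuous γ ∧ InjOn γ (Icc 0 1) ∧
    γ '' Icc 0 1 = A ∧ ∀ S ⊆ A, IsPreconnected S → OrdConnected (Icc 0 1 ∩ γ ⁻¹' S)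

lemma Par.closed {γ : ℝ → X} {A : Set X} (h : Par γ A) : IsClosed A := by
  rw [← h.2.2.1]; exact (isCompact_Icc.image h.1).isClosed

lemma grow [ConnectedSpace X] (𝒜 : Finset (Set X)) (hA : ∀ A ∈ 𝒜, IsArc A)
    (hU : ⋃₀ (𝒜 : Set (Set X)) = Set.univ)
    (hE : ∀ A ∈ 𝒜, ∀ B ∈ 𝒜, A ≠ B → ∀ p ∈ A ∩ B, IsArcEndpoint A p ∧ IsArcEndpoint B p)
    (hN : ∀ S : Set X, ¬ IsSimpleClosedCurve S) : PA (univ : Set X) := by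
  classical
  have hPar : ∀ A ∈ 𝒜, ∃ γ, Par γ A := fun A h => arc_param (hA A h)
  have hcl : ∀ A ∈ 𝒜, IsClosed A := fun A h => (hPar A h).choose_spec.closed
  have hcl' : ∀ ℬ : Finset (Set X), ℬ ⊆ 𝒜 → IsClosed (⋃₀ (ℬ : Set (Set X))) := by
    intro ℬ h
    rw [sUnion_eq_biUnion]
    exact ℬ.finite_toSet.isClosed_biUnion fun A h' => hcl A (h h')
  let P : Finset (Finset (Set X)) :=
    𝒜.powerset.filter (fun ℬ => ℬ.Nonempty ∧ PA (⋃₀ (ℬ : Set (Set X))))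
  have hP : P.Nonempty := by
    obtain ⟨x⟩ := (inferInstance : Nonempty X)
    obtain ⟨A, hA1, hx⟩ : x ∈ ⋃₀ (𝒜 : Set (Set X)) := hU ▸ mem_univ x
    obtain ⟨γ, h1, h2, h3, h4⟩ := hPar A hA1
    refine ⟨{A}, Finset.mem_filter.2 ⟨Finset.mem_powerset.2 (by simpa using hA1), by simp, ?_⟩⟩
    simpa using PA_arc h1 h2 h3 h4
  obtain ⟨ℬ, hℬ, hmax⟩ := P.exists_max_image Finset.card hP
  obtain ⟨hsub, hne, hPA⟩ := Finset.mem_filter.1 hℬ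
  rw [Finset.mem_powerset] at hsub
  by_cases hY : ⋃₀ (ℬ : Set (Set X)) = univ
  · rwa [hY] at hPA
  exfalso
  set Y := ⋃₀ (ℬ : Set (Set X)) with hYd
  have hYc : IsClosed Y := hcl' ℬ hsub
  have hcov : (univ : Set X) ⊆ Y ∪ ⋃₀ ((𝒜 \ ℬ : Finset (Set X)) : Set (Set X)) := by
    intro x _
    obtain ⟨A, hA1, hx⟩ : x ∈ ⋃₀ (𝒜 : Set (Set X)) := hU ▸ mem_univ x
    by_cases h : A ∈ ℬ
    · exact Or.inl ⟨A, h, hx⟩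
    · exact Or.inr ⟨A, by simpa using ⟨hA1, h⟩, hx⟩
  obtain ⟨z, hz⟩ : ∃ z, z ∉ Y := by
    by_contra! h; exact hY (eq_univ_of_forall h)
  obtain ⟨B0, hB0⟩ := hne
  obtain ⟨γ0, g0⟩ := hPar B0 (hsub hB0)
  have hy0 : γ0 0 ∈ Y := ⟨B0, hB0, by rw [← g0.2.2.1]; exact ⟨0, by simp, rfl⟩⟩
  obtain ⟨v, -, hvY, A, hA1, hvA⟩ := isPreconnected_closed_iff.1
    (isPreconnected_univ : IsPreconnected (univ : Set X)) Y _ hYc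
    (hcl' (𝒜 \ ℬ) Finset.sdiff_subset) hcov ⟨γ0 0, mem_univ _, hy0⟩
    ⟨z, mem_univ _, (hcov (mem_univ z)).resolve_left hz⟩
  simp only [Finset.coe_sdiff, Set.mem_sdiff, Finset.mem_coe] at hA1
  obtain ⟨γ, g⟩ := hPar A hA1.1
  have hends : ∀ p ∈ A, p ∈ Y → p = γ 0 ∨ p = γ 1 := by
    rintro p hp ⟨B, hB, hpB⟩
    have := hE A hA1.1 B (hsub hB) (fun h => hA1.2 (h ▸ hB)) p ⟨hp, hpB⟩
    exact arc_end g.2.2.1 g.2.2.2 this.1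
  by_cases hboth : γ 0 ∈ Y ∧ γ 1 ∈ Y
  · have h10 : γ 1 ≠ γ 0 := fun h => by
      have := g.2.1 (by simp) (by simp) h
      norm_num at this
    obtain ⟨δ, J⟩ := hPA.2 _ hboth.2 _ hboth.1 h10
    have s2 := J.sub hPA.1 hboth.2 hboth.1
    obtain ⟨c2, i2, h20, h21, -⟩ := J
    have hg : γ 1 = δ 0 := h20.symm
    obtain ⟨S, hS⟩ := circle_curve (cat_cont hg g.1.continuousOn c2)
      (by rw [cat_left _ _ (by norm_num), cat_right hg (by norm_num)]; norm_num [h21])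
      (cat_inj hg g.2.1 i2 (by
        intro s hs t ht h
        have ht' : t ∈ Icc (0:ℝ) 1 := ⟨ht.1, ht.2.le⟩
        rcases hends (γ s) (by rw [← g.2.2.1]; exact ⟨s, hs, rfl⟩)
          (h ▸ s2 ⟨t, ht', rfl⟩) with e | e
        · have := i2 ht' (by simp) (h.symm.trans (e.trans h21.symm))
          exact (ht.2.ne this).elim
        · exact i2 ht' (by simp) (h.symm.trans (e.trans h20.symm))))
    exact hN S hS
  · have hYA : Y ∩ A = {v} := by
      apply Subset.antisymm
      · rintro p ⟨hpY, hpA⟩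
        rw [mem_singleton_iff]
        rcases hends p hpA hpY with h | h <;> rcases hends v hvA hvY with h' | h'
        · rw [h, h']
        · exact (hboth ⟨h ▸ hpY, h' ▸ hvY⟩).elim
        · exact (hboth ⟨h' ▸ hvY, h ▸ hpY⟩).elim
        · rw [h, h']
      · rintro _ rfl; exact ⟨hvY, hvA⟩
    have hnew := glue hYc g.closed hYA hPA (PA_arc g.1 g.2.1 g.2.2.1 g.2.2.2)
    have := hmax (insert A ℬ) (Finset.mem_filter.2 ⟨Finset.mem_powerset.2
      (Finset.insert_subset hA1.1 hsub), by simp, by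
        rw [Finset.coe_insert, sUnion_insert, union_comm]; exact hnew⟩)
    rw [Finset.card_insert_of_notMem hA1.2] at this
    omega

lemma Par.ordc (hP : PA (univ : Set X)) {γ : ℝ → X} {A : Set X} (g : Par γ A) {S : Set X}
    (hS : IsPreconnected S) : OrdConnected (Icc 0 1 ∩ γ ⁻¹' S) := by
  constructor
  rintro s ⟨hs, hsS⟩ t ⟨ht, htS⟩
  by_cases hst : γ s = γ t
  · have := g.2.1 hs ht hst
    subst this
    simp only [Icc_self, singleton_subset_iff]
    exact ⟨hs, hsS⟩
  obtain ⟨δ, c, -, h0, h1, h⟩ := hP.2 _ (mem_univ (γ s)) _ (mem_univ (γ t)) hst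
  have hd := isPreconnected_Icc.image δ c
  have hA : IsPreconnected A := by
    rw [← g.2.2.1]; exact isPreconnected_Icc.image _ g.1.continuousOn
  have m : ∀ u ∈ Icc (0:ℝ) 1, γ u ∈ A := fun u hu => by rw [← g.2.2.1]; exact ⟨u, hu, rfl⟩
  have hdA := h A (subset_univ _) hA (m s hs) (m t ht)
  have hdS := h S (subset_univ _) hS hsS htS
  have := (g.2.2.2 _ hdA hd).out ⟨hs, ⟨0, by simp, h0⟩⟩ ⟨ht, ⟨1, by simp, h1⟩⟩
  exact fun u hu => ⟨(this hu).1, hdS (this hu).2⟩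

lemma avoid (𝒜 : Finset (Set X)) (hcl : ∀ A ∈ 𝒜, IsClosed A) (p : X) :
    (⋃ A ∈ {A ∈ (𝒜 : Set (Set X)) | p ∉ A}, A)ᶜ ∈ 𝓝 p := by
  apply IsOpen.mem_nhds
  · rw [isOpen_compl_iff]
    exact (𝒜.finite_toSet.subset (fun A h => h.1)).isClosed_biUnion fun A h => hcl A h.1
  · simp

lemma tree_star (hP : PA (univ : Set X)) (𝒜 : Finset (Set X)) (G : Set X → ℝ → X)
    (hG : ∀ A ∈ 𝒜, Par (G A) A)
    (hU : ⋃₀ (𝒜 : Set (Set X)) = Set.univ) (p : X) :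
    ∃ S : Finset X, p ∉ S ∧ (⋃ s ∈ S, hull p s) ∈ 𝓝 p := by
  classical
  refine ⟨(𝒜.image (fun A => G A 0) ∪ 𝒜.image (fun A => G A 1)).erase p, by simp, ?_⟩
  refine mem_of_superset (avoid 𝒜 (fun A h => (hG A h).closed) p) ?_
  intro x hx
  obtain ⟨A, hA1, hxA⟩ : x ∈ ⋃₀ (𝒜 : Set (Set X)) := hU ▸ mem_univ x
  have hpA : p ∈ A := by
    by_contra h
    exact hx (mem_biUnion (show A ∈ {A ∈ (𝒜 : Set (Set X)) | p ∉ A} from ⟨hA1, h⟩) hxA)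
  have g := hG A hA1
  have key : ∀ e, (e = G A 0 ∨ e = G A 1) → e ≠ p → x ∈ hull p e →
      x ∈ ⋃ s ∈ (𝒜.image (fun A => G A 0) ∪ 𝒜.image (fun A => G A 1)).erase p, hull p s := by
    intro e he hne h
    refine mem_biUnion (Finset.mem_coe.2 (Finset.mem_erase.2 ⟨hne, ?_⟩)) h
    rcases he with rfl | rfl
    · exact Finset.mem_union_left _ (Finset.mem_image_of_mem _ hA1)
    · exact Finset.mem_union_right _ (Finset.mem_image_of_mem (fun A => G A 1) hA1)
  rw [← g.2.2.1] at hxA hpA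
  obtain ⟨s, hs, rfl⟩ := hxA
  obtain ⟨t, ht, rfl⟩ := hpA
  have z0 : (0:ℝ) ∈ Icc (0:ℝ) 1 := by simp
  have z1 : (1:ℝ) ∈ Icc (0:ℝ) 1 := by simp
  rcases lt_trichotomy s t with h | h | h
  · refine key _ (Or.inl rfl) (fun e => ?_) ?_
    · have := g.2.1 z0 ht e
      linarith [hs.1]
    · rintro S ⟨hS, h1, h2⟩
      exact ((g.ordc hP hS).out ⟨z0, h2⟩ ⟨ht, h1⟩ ⟨hs.1, h.le⟩).2
  · subst h
    by_cases h : G A 0 = G A s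
    · refine key (G A 1) (Or.inr rfl) (fun e => ?_) (left_mem_hull _ _)
      have a := g.2.1 z0 hs h
      have b := g.2.1 z1 hs e
      linarith
    · exact key _ (Or.inl rfl) h (left_mem_hull _ _)
  · refine key _ (Or.inr rfl) (fun e => ?_) ?_
    · have := g.2.1 z1 ht e
      linarith [hs.2]
    · rintro S ⟨hS, h1, h2⟩
      exact ((g.ordc hP hS).out ⟨ht, h1⟩ ⟨z1, h2⟩ ⟨h.le, hs.2⟩).2

lemma Par.nb {γ : ℝ → X} {A : Set X} (g : Par γ A) {r : ℝ} (hr : r ∈ Icc (0:ℝ) 1)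
    (hA : A ∈ 𝓝 (γ r)) {O : Set ℝ} (hO : O ∈ 𝓝 r) : γ '' (Icc 0 1 ∩ O) ∈ 𝓝 (γ r) := by
  obtain ⟨O', h1, h2, h3⟩ := mem_nhds_iff.1 hO
  have hc : IsClosed (γ '' (Icc 0 1 \ O')) :=
    ((isCompact_Icc.diff h2).image g.1).isClosed
  have hn : γ r ∉ γ '' (Icc 0 1 \ O') := by
    rintro ⟨u, hu, e⟩
    have := g.2.1 hu.1 hr e
    exact hu.2 (this ▸ h3)
  filter_upwards [hA, hc.isOpen_compl.mem_nhds hn] with x hx hx'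
  rw [← g.2.2.1] at hx
  obtain ⟨u, hu, rfl⟩ := hx
  refine ⟨u, ⟨hu, h1 ?_⟩, rfl⟩
  by_contra h
  exact hx' ⟨u, ⟨hu, h⟩, rfl⟩

lemma tree_fin (hP : PA (univ : Set X)) (𝒜 : Finset (Set X)) (G : Set X → ℝ → X)
    (hG : ∀ A ∈ 𝒜, Par (G A) A)
    (hE : ∀ A ∈ 𝒜, ∀ B ∈ 𝒜, A ≠ B → ∀ p ∈ A ∩ B, IsArcEndpoint A p ∧ IsArcEndpoint B p)
    (hU : ⋃₀ (𝒜 : Set (Set X)) = Set.univ) (C : Set X) (hC : IsPreconnected C) :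
    ∃ F : Set X, F.Finite ∧ C \ F ⊆ interior C ∧ closure C \ F ⊆ C := by
  let I : Set X → Set ℝ := fun A => Icc 0 1 ∩ G A ⁻¹' C
  let F : Set X := ⋃ A ∈ (𝒜 : Set (Set X)),
    {G A 0, G A 1, G A (sInf (I A)), G A (sSup (I A))}
  have hF : F.Finite := 𝒜.finite_toSet.biUnion fun A _ => by simp
  have key : closure C \ F ⊆ interior C := by
    rintro x ⟨hxC, hxF⟩
    obtain ⟨A, hA1, hxA⟩ : x ∈ ⋃₀ (𝒜 : Set (Set X)) := hU ▸ mem_univ x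
    have g := hG A hA1
    have hx4 : x ∉ ({G A 0, G A 1, G A (sInf (I A)), G A (sSup (I A))} : Set X) :=
      fun h => hxF (mem_biUnion hA1 h)
    simp only [mem_insert_iff, mem_singleton_iff, not_or] at hx4
    obtain ⟨n0, n1, n2, n3⟩ := hx4
    have hAn : A ∈ 𝓝 x := by
      filter_upwards [avoid 𝒜 (fun A h => (hG A h).closed) x] with y hy
      obtain ⟨B, hB1, hyB⟩ : y ∈ ⋃₀ (𝒜 : Set (Set X)) := hU ▸ mem_univ y
      by_cases hBA : A = B
      · exact hBA ▸ hyB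
      · exfalso
        refine hy (mem_biUnion (show B ∈ {A ∈ (𝒜 : Set (Set X)) | x ∉ A} from ⟨hB1, ?_⟩) hyB)
        intro hxB
        rcases arc_end g.2.2.1 g.2.2.2 (hE A hA1 B hB1 hBA x ⟨hxA, hxB⟩).1 with h | h
        · exact n0 h
        · exact n1 h
    have hxA' := hxA
    rw [← g.2.2.1] at hxA'
    obtain ⟨r, hr, rfl⟩ := hxA'
    have hcl : r ∈ closure (I A) := by
      rw [mem_closure_iff_nhds]
      intro O hO
      obtain ⟨_, ⟨u, hu, rfl⟩, hy⟩ := mem_closure_iff_nhds.1 hxC _ (g.nb hr hAn hO)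
      exact ⟨u, hu.2, hu.1, hy⟩
    have hne : (I A).Nonempty := closure_nonempty_iff.1 ⟨r, hcl⟩
    have hb : BddBelow (I A) := ⟨0, fun u hu => hu.1.1⟩
    have ha : BddAbove (I A) := ⟨1, fun u hu => hu.1.2⟩
    have h1 : sInf (I A) < r := by
      refine lt_of_le_of_ne ?_ (fun h => n2 (by rw [h]))
      exact closure_minimal (fun u hu => csInf_le hb hu) isClosed_Ici hcl
    have h2 : r < sSup (I A) := by
      refine lt_of_le_of_ne ?_ (fun h => n3 (by rw [← h]))
      exact closure_minimal (fun u hu => le_csSup ha hu) isClosed_Iic hcl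
    obtain ⟨r1, hr1, hr1'⟩ := exists_lt_of_csInf_lt hne h1
    obtain ⟨r2, hr2, hr2'⟩ := exists_lt_of_lt_csSup hne h2
    rw [mem_interior_iff_mem_nhds]
    refine mem_of_superset (g.nb hr hAn (Ioo_mem_nhds hr1' hr2')) ?_
    rintro _ ⟨u, ⟨hu, hu'⟩, rfl⟩
    exact ((g.ordc hP hC).out hr1 hr2 ⟨hu'.1.le, hu'.2.le⟩).2
  exact ⟨F, hF, fun x hx => key ⟨subset_closure hx.1, hx.2⟩,
    fun x hx => interior_subset (key hx)⟩

lemma treeLike_of_isTree (hX : IsTree X) : TreeLike X := by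
  classical
  obtain ⟨_, _, ⟨𝒜, hA, hU, hE⟩, hN⟩ := hX
  have hP := grow 𝒜 hA hU hE hN
  have hPar : ∀ A : Set X, ∃ γ, A ∈ 𝒜 → Par γ A := fun A => by
    by_cases h : A ∈ 𝒜
    · obtain ⟨γ, hγ⟩ := arc_param (hA A h)
      exact ⟨γ, fun _ => hγ⟩
    · obtain ⟨x⟩ := (inferInstance : Nonempty X)
      exact ⟨fun _ => x, fun h' => (h h').elim⟩
  choose G hG using hPar
  refine ⟨?_, tree_star hP 𝒜 G hG hU, tree_fin hP 𝒜 G hG hE hU⟩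
  intro a b hab
  obtain ⟨γ, c, i, h0, h1, h⟩ := hP.2 a (mem_univ _) b (mem_univ _) hab
  exact ⟨γ, c, i, h0, h1, fun S => h S (subset_univ _)⟩

end growth

open Set Filter Topology Function
open scoped ENNReal

/-- For a zero entropy tree map, both members of a non-diagonal IN-pair of
the restricted system `(CR(f), f|_{CR(f)})` have infinite ω-limit sets. -/
theorem INPair_on_chainRecurrent_infinite_omegaLimits {X : Type*} [MetricSpace X]
    (hX : IsTree X) (f : X → X) (hf : Continuous f) (h0 : topEntropy f = 0)
    {x y : X} (hxy : INPairOn f (chainRecurrentSet f) x y) (hne : x ≠ y) :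
    (omegaLimitSet f x).Infinite ∧ (omegaLimitSet f y).Infinite := by
  have hcomp : CompactSpace X := hX.1
  have T := treeLike_of_isTree hX
  have hHS := not_HS h0
  obtain ⟨-, -, h⟩ := hxy
  constructor
  · refine final_x T hf hHS hne ?_
    intro U hU V hV m
    obtain ⟨I, hI, hJ⟩ := h U hU V hV m
    exact ⟨I, hI, fun J hJI hJn s => (hJ J hJI hJn s).mono inter_subset_right⟩
  · refine final_x T hf hHS hne.symm ?_
    intro U hU V hV m
    obtain ⟨I, hI, hJ⟩ := h V hV U hU m
    refine ⟨I, hI, fun J hJI hJn s => ?_⟩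
    have e : ∀ j, (if s j then U else V) = (if (!s j) then V else U) := by
      intro j; cases s j <;> rfl
    simp only [e]
    exact (hJ J hJI hJn (fun j => !s j)).mono inter_subset_right
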